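/- arXiv:2307.14820 — 2 statements merged into one kernel-verified Lean document; each statement's English description precedes it below -/
import Mathlib

section
/- Let G be a finite group with property SN and Q a subgroup of G which is not normal in G. (a) If N ≤ Q is a normal subgroup of G, then N is cyclic. (b) If moreover G is a p-group for a prime p, then Q is cyclic, elementary abelian, or isomorphic to the quaternion group Q₈ of order 8; and if additionally there is a non-trivial subgroup N ≤ Q which is normal in G, then Q is cyclic or isomorphic to Q₈. -/
/-- Property SN: for every normal subgroup `N` and every subgroup `Y` of `G`, either
`N ≤ Y` or the product `NY` (which equals `N ⊔ Y` since `N` is normal) is normal in `G`. -/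
def HasSN (G : Type*) [Group G] : Prop :=
  ∀ N : Subgroup G, N.Normal → ∀ Y : Subgroup G, N ≤ Y ∨ (N ⊔ Y).Normal

/-- Property SSN: every subgroup of `G` has SN. -/
def HasSSN (G : Type*) [Group G] : Prop :=
  ∀ H : Subgroup G, HasSN H

/-- A Dedekind group: every subgroup is normal. -/
def IsDedekind (G : Type*) [Group G] : Prop :=
  ∀ H : Subgroup G, H.Normal

/-- A subgroup is elementary abelian for the prime `p`: abelian with every element of
order dividing `p`. -/
def IsElemAbelian (p : ℕ) {G : Type*} [Group G] (P : Subgroup G) : Prop :=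
  (∀ x ∈ P, ∀ y ∈ P, x * y = y * x) ∧ ∀ x ∈ P, x ^ p = 1

lemma sn_part_a (G : Type) [Group G] (hSN : HasSN G)
    (Q : Subgroup G) (hQ : ¬ Q.Normal) (N : Subgroup G) (hN : N.Normal) (hNQ : N ≤ Q) :
    IsCyclic N := by
  by_contra hc
  apply hQ
  have key : ∀ x ∈ Q, (N ⊔ Subgroup.zpowers x).Normal := by
    intro x _
    rcases hSN N hN (Subgroup.zpowers x) with h | h
    · exact absurd (Subgroup.isCyclic_of_le h) hc
    · exact h
  constructor
  intro x hx g
  have h1 : x ∈ N ⊔ Subgroup.zpowers x :=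
    Subgroup.mem_sup_right (Subgroup.mem_zpowers x)
  have h2 := (key x hx).conj_mem x h1 g
  have h3 : N ⊔ Subgroup.zpowers x ≤ Q := sup_le hNQ (by simpa using hx)
  exact h3 h2

lemma sn_quot (G : Type) [Group G] (hSN : HasSN G) (N : Subgroup G) [hN : N.Normal] :
    HasSN (G ⧸ N) := by
  intro M hM Y
  have hs : Function.Surjective (QuotientGroup.mk' N) := QuotientGroup.mk'_surjective N
  rcases hSN (M.comap (QuotientGroup.mk' N)) inferInstance (Y.comap (QuotientGroup.mk' N))
    with h | h
  · left
    exact (Subgroup.comap_le_comap_of_surjective hs).1 h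
  · right
    have := h.map (QuotientGroup.mk' N) hs
    rwa [Subgroup.map_sup, Subgroup.map_comap_eq_self_of_surjective hs,
      Subgroup.map_comap_eq_self_of_surjective hs] at this

lemma sn_zp {G : Type} [Group G] {p : ℕ} (hp : p.Prime) {x c : G} (hx : x ^ p = 1)
    (hc : c ∈ Subgroup.zpowers x) (h1 : c ≠ 1) : x ∈ Subgroup.zpowers c := by
  obtain ⟨i, rfl⟩ := Subgroup.mem_zpowers_iff.1 hc
  have hi : ¬ (p : ℤ) ∣ i := by
    rintro ⟨j, rfl⟩
    apply h1
    rw [zpow_mul, zpow_natCast, hx, one_zpow]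
  have hco : IsCoprime (p : ℤ) i := (Nat.prime_iff_prime_int.1 hp).coprime_iff_not_dvd.2 hi
  obtain ⟨a, b, hab⟩ := hco
  refine Subgroup.mem_zpowers_iff.2 ⟨b, ?_⟩
  rw [← zpow_mul]
  calc x ^ (i * b) = (x ^ (p : ℤ)) ^ a * x ^ (i * b) := by
        rw [zpow_natCast, hx, one_zpow, one_mul]
    _ = x ^ (a * p + b * i) := by rw [← zpow_mul, ← zpow_add]; congr 1; ring
    _ = x := by rw [hab, zpow_one]

lemma sn_core_free (G : Type) [Group G] [Finite G] (hSN : HasSN G) (p : ℕ) (hp : p.Prime)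
    (hG : IsPGroup p G) (Q : Subgroup G)
    (hQ : ∀ M : Subgroup G, M.Normal → M ≤ Q → M = ⊥) : IsElemAbelian p Q := by
  haveI : Fact p.Prime := ⟨hp⟩
  rcases subsingleton_or_nontrivial G with hs | hnt
  · exact ⟨fun x _ y _ => Subsingleton.elim _ _, fun x _ => Subsingleton.elim _ _⟩
  have hcn := hG.center_nontrivial
  obtain ⟨n, hn, hcard⟩ := ((hG.to_subgroup (Subgroup.center G)).nontrivial_iff_card).1 hcn
  obtain ⟨⟨z, hzc⟩, hz⟩ := exists_prime_orderOf_dvd_card' (G := Subgroup.center G) p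
    (by rw [hcard]; exact dvd_pow_self p (by omega))
  have hz' : orderOf z = p := by rw [← hz]; simp
  have hzp : z ^ p = 1 := by rw [← hz']; exact pow_orderOf_eq_one z
  have hz1 : z ≠ 1 := by
    intro h
    rw [h, orderOf_one] at hz'
    exact hp.one_lt.ne hz'
  have hcomm : ∀ (m : ℤ) (g : G), Commute (z ^ m) g := fun m g =>
    Commute.zpow_left (Subgroup.mem_center_iff.1 hzc g).symm m
  have hnorm : ∀ m : ℤ, (Subgroup.zpowers (z ^ m)).Normal := by
    intro m
    constructor
    intro x hx g
    obtain ⟨j, rfl⟩ := Subgroup.mem_zpowers_iff.1 hx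
    rw [← zpow_mul, ← (hcomm (m * j) g).eq, mul_inv_cancel_right, zpow_mul]
    exact hx
  have key : ∀ y ∈ Q, ∀ g, ∃ m k : ℤ, g * y * g⁻¹ = z ^ m * y ^ k := by
    intro y hy g
    have hN := hnorm 1
    rw [zpow_one] at hN
    have : (Subgroup.zpowers z ⊔ Subgroup.zpowers y).Normal := by
      rcases hSN _ hN (Subgroup.zpowers y) with h | h
      · exfalso
        have := hQ _ hN (h.trans (by simpa using hy))
        exact hz1 (by simpa using this)
      · exact h
    have h2 := this.conj_mem y (Subgroup.mem_sup_right (Subgroup.mem_zpowers y)) g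
    obtain ⟨a, ha, b, hb, hab⟩ := Subgroup.mem_sup_of_normal_left.1 h2
    obtain ⟨m, rfl⟩ := Subgroup.mem_zpowers_iff.1 ha
    obtain ⟨k, rfl⟩ := Subgroup.mem_zpowers_iff.1 hb
    exact ⟨m, k, hab.symm⟩
  have hexp : ∀ y ∈ Q, y ^ p = 1 := by
    intro y hy
    have hn : (Subgroup.zpowers (y ^ p)).Normal := by
      constructor
      intro x hx g
      obtain ⟨j, rfl⟩ := Subgroup.mem_zpowers_iff.1 hx
      obtain ⟨m, k, hk⟩ := key y hy g
      refine Subgroup.mem_zpowers_iff.2 ⟨k * j, ?_⟩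
      have h1 : g * y ^ p * g⁻¹ = (y ^ p) ^ k := by
        rw [← conj_pow, hk, (hcomm m (y ^ k)).mul_pow, ← zpow_natCast (z ^ m), ← zpow_mul,
          mul_comm, zpow_mul, zpow_natCast, hzp, one_zpow, one_mul, ← zpow_natCast, ← zpow_natCast,
          ← zpow_mul, ← zpow_mul, mul_comm]
      rw [← conj_zpow, h1, zpow_mul]
    have := hQ _ hn (by simpa using Q.pow_mem hy p)
    simpa using this
  have hded : ∀ x ∈ Q, ∀ y ∈ Q, x * y * x⁻¹ ∈ Subgroup.zpowers y := by
    intro x hx y hy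
    obtain ⟨m, k, hk⟩ := key y hy x
    have h1 : z ^ m ∈ Q := by
      have : z ^ m = x * y * x⁻¹ * (y ^ k)⁻¹ := by rw [hk]; group
      rw [this]
      exact Q.mul_mem (Q.mul_mem (Q.mul_mem hx hy) (Q.inv_mem hx)) (Q.inv_mem (Q.zpow_mem hy k))
    have h2 := hQ _ (hnorm m) (by simpa using h1)
    have h3 : z ^ m = 1 := by simpa using h2
    rw [hk, h3, one_mul]
    exact Subgroup.mem_zpowers_iff.2 ⟨k, rfl⟩
  refine ⟨fun x hx y hy => ?_, hexp⟩
  by_contra hne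
  have hc1 : x * y * x⁻¹ * y⁻¹ ≠ 1 := by
    intro h
    apply hne
    have := mul_inv_eq_one.1 h
    exact mul_inv_eq_iff_eq_mul.1 this
  have hcy : x * y * x⁻¹ * y⁻¹ ∈ Subgroup.zpowers y :=
    Subgroup.mul_mem _ (hded x hx y hy) (Subgroup.inv_mem _ (Subgroup.mem_zpowers y))
  have hcx : x * y * x⁻¹ * y⁻¹ ∈ Subgroup.zpowers x := by
    have h := Subgroup.mul_mem _ (Subgroup.mem_zpowers x)
      (Subgroup.inv_mem _ (hded y hy x hx))
    have e : x * (y * x * y⁻¹)⁻¹ = x * y * x⁻¹ * y⁻¹ := by group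
    rwa [e] at h
  obtain ⟨i, hi⟩ := Subgroup.mem_zpowers_iff.1 (sn_zp hp (hexp x hx) hcx hc1)
  obtain ⟨j, hj⟩ := Subgroup.mem_zpowers_iff.1 (sn_zp hp (hexp y hy) hcy hc1)
  apply hne
  generalize x * y * x⁻¹ * y⁻¹ = c at hi hj
  rw [← hi, ← hj, ← zpow_add, ← zpow_add, add_comm]

lemma sn_quat (H : Type) [Group H] (u v : H) (h4 : u ^ 4 = 1) (h2 : u ^ 2 ≠ 1)
    (hv : v * v = u ^ 2) (huv : u * v = v * u⁻¹)
    (hall : ∀ t : H, t ∈ Subgroup.zpowers u ∨ v⁻¹ * t ∈ Subgroup.zpowers u) :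
    Nonempty (H ≃* QuaternionGroup 2) := by
  have hord : orderOf u = 4 := by
    have := orderOf_eq_prime_pow (x := u) (p := 2) (n := 1) (by simpa using h2) (by simpa using h4)
    simpa using this
  let f : ZMod (2 * 2) → H := fun i => u ^ i.val
  have fadd : ∀ i j, f (i + j) = f i * f j := by
    intro i j
    simp only [f]
    rw [← pow_add, ZMod.val_add, ← pow_mod_orderOf u (i.val + j.val), hord]
  have f0 : f 0 = 1 := by simp [f]
  have fneg : ∀ i, f (-i) = (f i)⁻¹ := by
    intro i
    rw [eq_inv_iff_mul_eq_one, ← fadd, neg_add_cancel, f0]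
  have f2 : f 2 = v * v := by rw [hv]; rfl
  have fsub : ∀ i j, f (i - j) = f i * (f j)⁻¹ := by
    intro i j
    rw [sub_eq_add_neg, fadd, fneg]
  have fcomm : ∀ i j, f i * f j = f j * f i := by
    intro i j
    rw [← fadd, ← fadd, add_comm]
  have fv : ∀ i, f i * v = v * (f i)⁻¹ := by
    intro i
    have h : SemiconjBy v (u⁻¹) u := huv.symm
    have := (h.pow_right i.val).eq
    simp only [f]
    rw [← inv_pow, this]
  have fint : ∀ k : ℤ, f (k : ZMod (2 * 2)) = u ^ k := by
    intro k
    simp only [f]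
    rw [← zpow_natCast, ZMod.val_intCast, ← zpow_mod_orderOf u k, hord]
  let F : QuaternionGroup 2 →* H := MonoidHom.mk'
    (fun q => match q with
      | .a i => f i
      | .xa i => v * f i) (by
      rintro (i | i) (j | j)
      · rw [QuaternionGroup.a_mul_a]
        exact fadd i j
      · rw [QuaternionGroup.a_mul_xa]
        change v * f (j - i) = f i * (v * f j)
        rw [← mul_assoc, fv, fsub, mul_assoc, ← fneg, fcomm]
      · rw [QuaternionGroup.xa_mul_a]
        change v * f (i + j) = v * f i * f j
        rw [fadd, mul_assoc]
      · rw [QuaternionGroup.xa_mul_xa]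
        change f (2 + j - i) = v * f i * (v * f j)
        rw [mul_assoc v, ← mul_assoc (f i), fv, ← fneg, mul_assoc, ← mul_assoc v, ← f2, ← fadd,
          ← fadd]
        congr 1
        ring)
  have hF : Function.Bijective F := by
    constructor
    · rw [injective_iff_map_eq_one]
      rintro (i | i) h
      · have h' : u ^ i.val = 1 := h
        have hd := orderOf_dvd_of_pow_eq_one h'
        rw [hord] at hd
        have hlt : i.val < 2 * 2 := ZMod.val_lt i
        have : i.val = 0 := Nat.eq_zero_of_dvd_of_lt hd hlt
        have : i = 0 := (ZMod.val_eq_zero i).1 this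
        rw [this]
        rfl
      · exfalso
        have h' : v * u ^ i.val = 1 := h
        have hvu : v = (u ^ i.val)⁻¹ := mul_eq_one_iff_eq_inv.1 h'
        have hc : Commute u v := by
          rw [hvu]
          exact ((Commute.refl u).pow_right _).inv_right
        apply h2
        rw [hc.eq] at huv
        have := mul_left_cancel huv
        rw [pow_two]
        nth_rewrite 1 [this]
        simp
    · intro t
      rcases hall t with h | h
      · obtain ⟨k, hk⟩ := Subgroup.mem_zpowers_iff.1 h
        refine ⟨.a (k : ZMod (2 * 2)), ?_⟩
        change f k = t
        rw [fint, hk]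
      · obtain ⟨k, hk⟩ := Subgroup.mem_zpowers_iff.1 h
        refine ⟨.xa (k : ZMod (2 * 2)), ?_⟩
        change v * f k = t
        rw [fint, hk, mul_inv_cancel_left]
  exact ⟨(MulEquiv.ofBijective F hF).symm⟩

lemma sn_pow (G : Type) [Group G] (v s d : G) (h : s * v = d * (v * s)) (hdv : Commute d v)
    (hds : Commute d s) (n : ℕ) : (v * s) ^ n = v ^ n * s ^ n * d ^ (n.choose 2) := by
  have h1 : ∀ n : ℕ, s ^ n * v = d ^ n * (v * s ^ n) := by
    intro n
    induction n with
    | zero => simp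
    | succ n ih =>
      calc s ^ (n + 1) * v = s * (s ^ n * v) := by rw [pow_succ', mul_assoc]
        _ = s * d ^ n * v * s ^ n := by rw [ih]; group
        _ = d ^ n * (s * v) * s ^ n := by rw [← (hds.pow_left n).eq]; group
        _ = d ^ (n + 1) * (v * s ^ (n + 1)) := by
          rw [h, pow_succ, pow_succ' s]; simp only [mul_assoc]
  induction n with
  | zero => simp
  | succ n ih =>
    have e : (n + 1).choose 2 = n + n.choose 2 := by
      rw [Nat.choose_succ_succ' n 1]; simp
    have hd : Commute (d ^ n.choose 2) (v * s) := (hdv.mul_right hds).pow_left _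
    have hd2 : Commute (d ^ n) (v ^ n) := (hdv.pow_left n).pow_right n
    have hd3 : Commute (d ^ n) (v ^ (n + 1) * s ^ (n + 1)) :=
      ((hdv.pow_left n).pow_right _).mul_right ((hds.pow_left n).pow_right _)
    calc (v * s) ^ (n + 1) = v ^ n * s ^ n * (d ^ n.choose 2 * (v * s)) := by
          rw [pow_succ, ih, mul_assoc]
      _ = v ^ n * (s ^ n * v) * s * d ^ n.choose 2 := by rw [hd.eq]; simp only [mul_assoc]
      _ = (v ^ n * d ^ n) * v * s ^ n * s * d ^ n.choose 2 := by rw [h1]; simp only [mul_assoc]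
      _ = d ^ n * (v ^ (n + 1) * s ^ (n + 1)) * d ^ n.choose 2 := by
          rw [← hd2.eq, pow_succ v, pow_succ s]; simp only [mul_assoc]
      _ = _ := by rw [hd3.eq, e, pow_add d, mul_assoc]

lemma sn_main (G : Type) [Group G] (p : ℕ) (hp : p.Prime) (Q N : Subgroup G) (hNQ : N ≤ Q)
    (hne : N ≠ ⊥) (hQN : ¬ Q ≤ N)
    (H1 : ∀ Y ≤ Q, N ≤ Y ∨ Y ≤ N) (H2 : ∀ x ∈ Q, x ^ p ∈ N)
    (H3 : ∀ x ∈ Q, ∀ y ∈ Q, x * y * (y * x)⁻¹ ∈ N) :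
    IsCyclic Q ∨ Nonempty (Q ≃* QuaternionGroup 2) := by
  have H4 : ∀ x ∈ Q, x ∉ N → N ≤ Subgroup.zpowers x := by
    intro x hx hxN
    rcases H1 (Subgroup.zpowers x) (by simpa using hx) with h | h
    · exact h
    · exact absurd (h (Subgroup.mem_zpowers x)) hxN
  have H5 : ∀ x ∈ Q, x ∉ N → ∀ n ∈ N, ∃ j : ℤ, n = (x ^ p) ^ j := by
    intro x hx hxN n hn
    obtain ⟨i, rfl⟩ := Subgroup.mem_zpowers_iff.1 (H4 x hx hxN hn)
    by_cases hi : (p : ℤ) ∣ i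
    · obtain ⟨j, rfl⟩ := hi
      exact ⟨j, by rw [zpow_mul, zpow_natCast]⟩
    · exfalso
      have hco : IsCoprime (p : ℤ) i := (Nat.prime_iff_prime_int.1 hp).coprime_iff_not_dvd.2 hi
      obtain ⟨a, b, hab⟩ := hco
      apply hxN
      have : x = (x ^ p) ^ a * (x ^ i) ^ b := by
        rw [← zpow_natCast, ← zpow_mul, ← zpow_mul, ← zpow_add]
        rw [show (p : ℤ) * a + i * b = a * p + b * i by ring, hab, zpow_one]
      rw [this]
      exact N.mul_mem (N.zpow_mem (H2 x hx) a) (N.zpow_mem hn b)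
  have H5' : ∀ x ∈ Q, x ^ p = 1 → x ∈ N := by
    intro x hx h1
    by_contra hxN
    apply hne
    rw [Subgroup.eq_bot_iff_forall]
    intro n hn
    obtain ⟨j, hj⟩ := H5 x hx hxN n hn
    rw [hj, h1, one_zpow]
  obtain ⟨x₀, hx₀, hx₀N⟩ := SetLike.not_le_iff_exists.1 hQN
  have hzc : ∀ (w a b : G), a ∈ Subgroup.zpowers w → b ∈ Subgroup.zpowers w → Commute a b := by
    intro w a b ha hb
    obtain ⟨i, rfl⟩ := Subgroup.mem_zpowers_iff.1 ha
    obtain ⟨j, rfl⟩ := Subgroup.mem_zpowers_iff.1 hb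
    exact ((Commute.refl w).zpow_left i).zpow_right j
  have H6 : ∀ n ∈ N, ∀ y ∈ Q, Commute n y := by
    intro n hn y hy
    by_cases hyN : y ∈ N
    · exact hzc x₀ n y (H4 x₀ hx₀ hx₀N hn) (H4 x₀ hx₀ hx₀N hyN)
    · exact hzc y n y (H4 y hy hyN hn) (Subgroup.mem_zpowers y)
  have H7' : ∀ u ∈ Q, u ∉ N → ∀ v ∈ Q, ∀ k : ℤ, (v * u ^ (-k)) ^ p = 1 →
      v ∈ Subgroup.zpowers u := by
    intro u hu huN v hv k h
    have hw := H4 u hu huN (H5' _ (Q.mul_mem hv (Q.zpow_mem hu _)) h)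
    have e : v = v * u ^ (-k) * u ^ k := by group
    rw [e]
    exact Subgroup.mul_mem _ hw (Subgroup.zpow_mem _ (Subgroup.mem_zpowers u) k)
  have H7 : ∀ u ∈ Q, u ∉ N → ∀ v ∈ Q, Commute u v → v ∈ Subgroup.zpowers u := by
    intro u hu huN v hv hc
    obtain ⟨k, hk⟩ := H5 u hu huN _ (H2 v hv)
    refine H7' u hu huN v hv k ?_
    rw [(hc.symm.zpow_right (-k)).mul_pow, hk, ← zpow_natCast, ← zpow_natCast, ← zpow_mul,
      ← zpow_mul, ← zpow_add]
    rw [show (p : ℤ) * k + -k * p = 0 by ring, zpow_zero]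
  by_cases hab : ∀ u ∈ Q, ∀ v ∈ Q, Commute u v
  · left
    refine ⟨⟨⟨x₀, hx₀⟩, ?_⟩⟩
    rintro ⟨y, hy⟩
    obtain ⟨k, hk⟩ := Subgroup.mem_zpowers_iff.1 (H7 x₀ hx₀ hx₀N y hy (hab _ hx₀ _ hy))
    exact Subgroup.mem_zpowers_iff.2 ⟨k, by ext; simpa using hk⟩
  right
  push Not at hab
  obtain ⟨u, hu, v, hv, huv⟩ := hab
  have huN : u ∉ N := fun h => huv (H6 u h v hv)
  have hvN : v ∉ N := fun h => huv (H6 v h u hu).symm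
  have hvu : v ∉ Subgroup.zpowers u := fun h => huv (hzc u u v (Subgroup.mem_zpowers u) h)
  obtain ⟨k, hk⟩ := H5 u hu huN _ (H2 v hv)
  set s := u ^ (-k) with hs
  have hsQ : s ∈ Q := Q.zpow_mem hu _
  set d := s * v * (v * s)⁻¹ with hd
  have hdN : d ∈ N := H3 s hsQ v hv
  have hdQ := hNQ hdN
  have hsv : s * v = d * (v * s) := by rw [hd]; group
  have hdp : d ^ p = 1 := by
    have h1 : s * v ^ p * s⁻¹ = d ^ p * v ^ p := by
      rw [← conj_pow, hsv, ← (H6 d hdN v hv).mul_pow]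
      congr 1
      group
    rw [← (H6 _ (H2 v hv) s hsQ).eq, mul_inv_cancel_right] at h1
    exact (mul_eq_right.1 h1.symm)
  have hpow := sn_pow G v s d hsv (H6 d hdN v hv) (H6 d hdN s hsQ) p
  have hvs : v ^ p * s ^ p = 1 := by
    rw [hk, hs, ← zpow_natCast, ← zpow_natCast, ← zpow_mul, ← zpow_mul, ← zpow_add]
    rw [show (p : ℤ) * k + -k * p = 0 by ring, zpow_zero]
  rw [hvs, one_mul] at hpow
  have hp2 : p = 2 := by
    by_contra hp2
    have : p ∣ p.choose 2 := hp.dvd_choose_self (by norm_num)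
      (lt_of_le_of_ne hp.two_le (Ne.symm hp2))
    obtain ⟨j, hj⟩ := this
    rw [hj, pow_mul, hdp, one_pow] at hpow
    exact hvu (H7' u hu huN v hv k hpow)
  subst hp2
  simp only [Nat.choose_self, pow_one] at hpow
  have hwN : v * s ∉ N := by
    intro h
    apply hvu
    have e : v = v * s * u ^ k := by rw [hs]; group
    rw [e]
    exact Subgroup.mul_mem _ (H4 u hu huN h) (Subgroup.zpow_mem _ (Subgroup.mem_zpowers u) k)
  have hN : ∀ n ∈ N, n = 1 ∨ n = d := by
    intro n hn
    obtain ⟨j, hj⟩ := H5 _ (Q.mul_mem hv hsQ) hwN n hn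
    rw [hpow] at hj
    rcases Int.even_or_odd' j with ⟨i, rfl | rfl⟩
    · left
      rw [hj, zpow_mul]
      norm_cast
      rw [hdp, one_zpow]
    · right
      rw [hj, zpow_add, zpow_mul]
      norm_cast
      rw [hdp, one_zpow, one_mul, pow_one]
  have hsq : ∀ x ∈ Q, x ∉ N → x ^ 2 = d := by
    intro x hx hxN
    rcases hN _ (H2 x hx) with h | h
    · exact absurd (H5' x hx h) hxN
    · exact h
  have hd1 : d ≠ 1 := by
    intro h
    exact huN (H5' u hu (by rw [hsq u hu huN, h]))
  have hcm : ∀ x ∈ Q, ∀ y ∈ Q, Commute x y ∨ x * y = d * (y * x) := by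
    intro x hx y hy
    rcases hN _ (H3 x hx y hy) with h | h
    · left
      exact mul_inv_eq_one.1 h
    · right
      exact mul_inv_eq_iff_eq_mul.1 h
  have hu2 := hsq u hu huN
  have hv2 := hsq v hv hvN
  have huv' : u * v = d * (v * u) := (hcm u hu v hv).resolve_left huv
  have hmem : ∀ w ∈ Q, w ∉ N → ∀ t ∈ Q, Commute w t → t ∈ Subgroup.zpowers u ∨
      t * w⁻¹ ∈ Subgroup.zpowers u := by
    intro w hw hwN t ht hc
    have hdu : d ∈ Subgroup.zpowers u := H4 u hu huN hdN
    obtain ⟨j, hj⟩ := Subgroup.mem_zpowers_iff.1 (H7 w hw hwN t ht hc)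
    have hw2 := hsq w hw hwN
    rcases Int.even_or_odd' j with ⟨i, rfl | rfl⟩
    · left
      rw [← hj, zpow_mul]
      norm_cast
      rw [hw2]
      exact Subgroup.zpow_mem _ hdu i
    · right
      rw [← hj, zpow_add, zpow_mul, zpow_one, mul_inv_cancel_right]
      norm_cast
      rw [hw2]
      exact Subgroup.zpow_mem _ hdu i
  have hu4 : u ^ 4 = 1 := by
    rw [show 4 = 2 * 2 by norm_num, pow_mul, hu2, hdp]
  have hrel : u * v = v * u⁻¹ := by
    rw [huv', (H6 d hdN _ (Q.mul_mem hv hu)).eq, mul_assoc]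
    congr 1
    rw [← hu2, eq_inv_iff_mul_eq_one, ← hu4]
    group
  have hvuQ := Q.mul_mem hv hu
  have hvuN : v * u ∉ N := by
    intro h
    apply hvu
    have e : v = v * u * u⁻¹ := by group
    rw [e]
    exact Subgroup.mul_mem _ (H4 u hu huN h) (Subgroup.inv_mem _ (Subgroup.mem_zpowers u))
  have hconj : ∀ t ∈ Subgroup.zpowers u, v⁻¹ * t * v ∈ Subgroup.zpowers u := by
    intro t ht
    obtain ⟨i, rfl⟩ := Subgroup.mem_zpowers_iff.1 ht
    have h1 : v⁻¹ * u * v = u⁻¹ := by rw [mul_assoc, hrel]; group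
    have h2 : v⁻¹ * u ^ i * v = (v⁻¹ * u * v) ^ i := by
      have := conj_zpow (a := v⁻¹) (b := u) (i := i)
      rw [inv_inv] at this
      exact this.symm
    rw [h2, h1]
    exact Subgroup.zpow_mem _ (Subgroup.inv_mem _ (Subgroup.mem_zpowers u)) i
  have hall : ∀ t ∈ Q, t ∈ Subgroup.zpowers u ∨ v⁻¹ * t ∈ Subgroup.zpowers u := by
    intro t ht
    rcases hcm u hu t ht with h | h
    · exact Or.inl (H7 u hu huN t ht h)
    rcases hcm v hv t ht with h' | h'
    · rcases hmem v hv hvN t ht h' with h2 | h2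
      · exact Or.inl h2
      · right
        have := hconj _ h2
        rwa [mul_assoc, inv_mul_cancel_right] at this
    · have hc : Commute (v * u) t := by
        change v * u * t = t * (v * u)
        calc v * u * t = v * d * t * u := by rw [mul_assoc, h]; simp only [mul_assoc]
          _ = d * (v * t) * u := by rw [← (H6 d hdN v hv).eq]; simp only [mul_assoc]
          _ = d ^ 2 * (t * (v * u)) := by rw [h', pow_two]; simp only [mul_assoc]
          _ = t * (v * u) := by rw [hdp, one_mul]
      rcases hmem _ hvuQ hvuN t ht hc with h2 | h2
      · exact Or.inl h2
      · right
        have := Subgroup.mul_mem _ (hconj _ h2) (Subgroup.mem_zpowers u)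
        have e : v⁻¹ * (t * (v * u)⁻¹) * v * u = v⁻¹ * t := by group
        rwa [e] at this
  refine sn_quat Q ⟨u, hu⟩ ⟨v, hv⟩ (Subtype.ext (by simpa using hu4)) ?_
    (Subtype.ext ?_) (Subtype.ext (by simpa using hrel)) ?_
  · intro h
    have := congrArg Subtype.val h
    simp only [Subgroup.coe_pow, Subgroup.coe_one] at this
    exact hd1 (hu2 ▸ this)
  · change v * v = u ^ 2
    rw [← pow_two, hu2, hv2]
  · rintro ⟨t, ht⟩
    rcases hall t ht with h | h
    · left
      obtain ⟨i, hi⟩ := Subgroup.mem_zpowers_iff.1 h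
      exact Subgroup.mem_zpowers_iff.2 ⟨i, Subtype.ext (by simpa using hi)⟩
    · right
      obtain ⟨i, hi⟩ := Subgroup.mem_zpowers_iff.1 h
      exact Subgroup.mem_zpowers_iff.2 ⟨i, Subtype.ext (by simpa using hi)⟩

/-- Let `G` be a finite group with SN and `Q` a non-normal subgroup.  (a) Any normal subgroup
of `G` contained in `Q` is cyclic.  (b) If `G` is a `p`-group, then `Q` is cyclic, elementary
abelian or isomorphic to `Q₈`; and if moreover `Q` contains a non-trivial normal subgroup of
`G`, then `Q` is cyclic or isomorphic to `Q₈`. -/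
theorem stmt_5 (G : Type) [Group G] [Finite G] (hSN : HasSN G)
    (Q : Subgroup G) (hQ : ¬ Q.Normal) :
    (∀ N : Subgroup G, N.Normal → N ≤ Q → IsCyclic N) ∧
    (∀ p : ℕ, p.Prime → IsPGroup p G →
      (IsCyclic Q ∨ IsElemAbelian p Q ∨ Nonempty (Q ≃* QuaternionGroup 2)) ∧
      ((∃ N : Subgroup G, N.Normal ∧ N ≤ Q ∧ N ≠ ⊥) →
        IsCyclic Q ∨ Nonempty (Q ≃* QuaternionGroup 2))) := by
  refine ⟨sn_part_a G hSN Q hQ, fun p hp hG => ?_⟩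
  have hcore : ∀ M : Subgroup G, M.Normal → M ≤ Q → M ≤ Q.normalCore := fun M hM h =>
    Subgroup.normal_le_normalCore.2 h
  by_cases hb : Q.normalCore = ⊥
  · have hf : ∀ M : Subgroup G, M.Normal → M ≤ Q → M = ⊥ := fun M hM h =>
      le_bot_iff.1 (hb ▸ hcore M hM h)
    refine ⟨Or.inr (Or.inl (sn_core_free G hSN p hp hG Q hf)), ?_⟩
    rintro ⟨M, hM, hMQ, hne⟩
    exact absurd (hf M hM hMQ) hne
  · have hmain : IsCyclic Q ∨ Nonempty (Q ≃* QuaternionGroup 2) := by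
      set N := Q.normalCore with hNdef
      have hNQ : N ≤ Q := Subgroup.normalCore_le Q
      have hNn : N.Normal := Subgroup.normalCore_normal Q
      have hs : Function.Surjective (QuotientGroup.mk' N) := QuotientGroup.mk'_surjective N
      have hE := sn_core_free (G ⧸ N) (sn_quot G hSN N) p hp (hG.to_quotient N)
        (Q.map (QuotientGroup.mk' N)) (by
          intro M hM hMQ
          have h1 : M.comap (QuotientGroup.mk' N) ≤ Q := by
            have := Subgroup.comap_mono (f := QuotientGroup.mk' N) hMQ
            rwa [Subgroup.comap_map_eq_self (by rw [QuotientGroup.ker_mk']; exact hNQ)] at this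
          have h2 := hcore _ (hM.comap _) h1
          rw [Subgroup.eq_bot_iff_forall]
          intro x hx
          obtain ⟨g, rfl⟩ := hs x
          exact (QuotientGroup.eq_one_iff g).2 (h2 hx))
      refine sn_main G p hp Q N hNQ hb ?_ ?_ ?_ ?_
      · intro h
        exact hQ ((le_antisymm h hNQ) ▸ hNn)
      · intro Y hY
        rcases hSN N hNn Y with h | h
        · exact Or.inl h
        · exact Or.inr (le_sup_right.trans (hcore _ h (sup_le hNQ hY)))
      · intro x hx
        have := hE.2 (QuotientGroup.mk' N x) (Subgroup.mem_map_of_mem _ hx)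
        rw [← map_pow] at this
        exact (QuotientGroup.eq_one_iff _).1 this
      · intro x hx y hy
        have := hE.1 (QuotientGroup.mk' N x) (Subgroup.mem_map_of_mem _ hx)
          (QuotientGroup.mk' N y) (Subgroup.mem_map_of_mem _ hy)
        rw [← map_mul, ← map_mul, ← mul_inv_eq_one, ← map_inv, ← map_mul] at this
        exact (QuotientGroup.eq_one_iff _).1 this
    refine ⟨?_, fun _ => hmain⟩
    rcases hmain with h | h
    · exact Or.inl h
    · exact Or.inr (Or.inr h)
end

section
/- Let G be a finite 2-group which has property SN but not property SSN. Then every element of order 2 in G is central if and only if G is isomorphic to Q₈ × Q₈, the direct product of two quaternion groups of order 8. -/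
namespace S7

open Subgroup

set_option linter.unusedSectionVars false

section basics
variable {G : Type*} [Group G]

/-- `a` and `b` commute up to the central element `e` of order at most two. -/
def R (e a b : G) : Prop := e ^ 2 = 1 ∧ (∀ x, x * e = e * x) ∧ a * b = e * (b * a)

lemma R.symm {e a b : G} (h : R e a b) : R e b a := by
  obtain ⟨h1, h2, h3⟩ := h
  refine ⟨h1, h2, ?_⟩
  rw [h3, ← mul_assoc, ← sq, h1, one_mul]

lemma mul_sq_central {e f : G} (he : e ^ 2 = 1) (hf : f ^ 2 = 1) (hc : ∀ x, x * e = e * x) :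
    (e * f) ^ 2 = 1 := by
  have : Commute e f := (hc f).symm
  rw [this.mul_pow, he, hf, one_mul]

lemma R.mul_right {e f a b c : G} (h : R e a b) (k : R f a c) : R (e * f) a (b * c) := by
  obtain ⟨h1, h2, h3⟩ := h
  obtain ⟨k1, k2, k3⟩ := k
  refine ⟨mul_sq_central h1 k1 h2, ?_, ?_⟩
  · intro x
    rw [← mul_assoc, h2, mul_assoc, k2, mul_assoc]
  · calc a * (b * c) = (a * b) * c := by group
      _ = e * b * (a * c) := by rw [h3]; group
      _ = e * (b * f) * (c * a) := by rw [k3]; group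
      _ = _ := by rw [k2]; group

lemma R.mul_left {e f a b c : G} (h : R e a c) (k : R f b c) : R (e * f) (a * b) c :=
  (h.symm.mul_right k.symm).symm

lemma R.self (a : G) : R 1 a a := ⟨by simp, by simp, by simp⟩

lemma R.of_comm {a b : G} (h : a * b = b * a) : R 1 a b := ⟨by simp, by simp, by simp [h]⟩

lemma R.comm {a b : G} (h : R 1 a b) : a * b = b * a := by simpa using h.2.2

lemma R.sq {e a b : G} (h : R e a b) : (a * b) ^ 2 = e * (a ^ 2 * b ^ 2) := by
  obtain ⟨h1, h2, h3⟩ := h.symm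
  calc (a * b) ^ 2 = a * (b * a) * b := by rw [pow_two]; group
    _ = (a * e) * (a * b * b) := by rw [h3]; group
    _ = _ := by rw [h2]; simp only [pow_two, mul_assoc]

lemma R.unique {e f a b : G} (h : R e a b) (k : R f a b) : e = f := by
  have := h.2.2.symm.trans k.2.2
  exact mul_right_cancel this

lemma R.inv_left {e a b : G} (h : R e a b) : R e a⁻¹ b := by
  obtain ⟨h1, h2, h3⟩ := h.symm
  refine ⟨h1, h2, ?_⟩
  have : b = e * (a * b * a⁻¹) := by
    rw [eq_comm, ← mul_assoc, ← h3]; group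
  have h4 : a⁻¹ * b = (a⁻¹ * e) * (a * b * a⁻¹) := by
    conv_lhs => rw [this]
    group
  rw [h4, h2]; group

lemma R.pow_left {e a b : G} (h : R e a b) (n : ℕ) : R (e ^ n) (a ^ n) b := by
  induction n with
  | zero => simpa using R.of_comm (by simp)
  | succ n ih => simpa only [pow_succ] using ih.mul_left h

lemma R.sq_comm {e a b : G} (h : R e a b) : a ^ 2 * b = b * a ^ 2 := by
  have := h.pow_left 2
  rw [h.1] at this
  exact this.comm

lemma R.conj {e a b : G} (h : R e a b) : a * b * a⁻¹ = e * b := by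
  rw [h.2.2]; group

lemma R.of_conj {e a b : G} (h1 : e ^ 2 = 1) (h2 : ∀ x, x * e = e * x)
    (h : a * b * a⁻¹ = b * e) : R e a b := by
  refine ⟨h1, h2, ?_⟩
  rw [← mul_assoc, ← h2, ← h]; group

end basics

section two
variable {G : Type*} [Group G] [Finite G]

lemma last_out (hp : IsPGroup 2 G) (K : Subgroup G) (x : G) (hx : x ∉ K) :
    ∃ k : ℕ, x ^ (2 ^ k) ∉ K ∧ (x ^ (2 ^ k)) ^ 2 ∈ K := by
  classical
  have hex : ∃ k : ℕ, x ^ (2 ^ k) ∈ K := by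
    obtain ⟨k, hk⟩ := (isPGroup_iff_pow_pow_eq_one.1 hp) x
    exact ⟨k, by rw [hk]; exact K.one_mem⟩
  have h0 : Nat.find hex ≠ 0 := by
    intro h
    have := Nat.find_spec hex
    rw [h] at this
    exact hx (by simpa using this)
  obtain ⟨m, hm⟩ := Nat.exists_eq_succ_of_ne_zero h0
  refine ⟨m, Nat.find_min hex (by omega), ?_⟩
  have := Nat.find_spec hex
  rw [hm] at this
  rwa [← pow_mul, ← pow_succ]

lemma exists_pow (a b : G) (h : b ∈ zpowers a) : ∃ n : ℕ, b = a ^ n := by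
  rw [← mem_powers_iff_mem_zpowers] at h
  obtain ⟨n, hn⟩ := h
  exact ⟨n, hn.symm⟩

lemma order_two_pow (hp : IsPGroup 2 G) (x : G) : ∃ n : ℕ, orderOf x = 2 ^ n :=
  IsPGroup.iff_orderOf.1 hp x

lemma unique_invol (x s s' : G) (hs : s ∈ zpowers x) (hs' : s' ∈ zpowers x) (h1 : s ^ 2 = 1)
    (h2 : s' ^ 2 = 1) (n1 : s ≠ 1) (n2 : s' ≠ 1) : s = s' := by
  obtain ⟨m, rfl⟩ := exists_pow x s hs
  obtain ⟨n, rfl⟩ := exists_pow x s' hs'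
  rw [← pow_mul] at h1 h2
  obtain ⟨p, hpm⟩ := orderOf_dvd_of_pow_eq_one h1
  obtain ⟨q, hqn⟩ := orderOf_dvd_of_pow_eq_one h2
  have key : ∀ m p : ℕ, x ^ m ≠ 1 → m * 2 = orderOf x * p → p % 2 = 1 := by
    intro m p hm hmp
    by_contra hcon
    obtain ⟨r, rfl⟩ : ∃ r, p = 2 * r := ⟨p / 2, by omega⟩
    apply hm
    apply orderOf_dvd_iff_pow_eq_one.1
    exact ⟨r, by nlinarith⟩
  have e1 := key m p n1 hpm
  have e2 := key n q n2 hqn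
  have : x ^ m * x ^ n = 1 := by
    rw [← pow_add]
    apply orderOf_dvd_iff_pow_eq_one.1
    obtain ⟨r, hr⟩ : ∃ r, p + q = 2 * r := ⟨(p + q) / 2, by omega⟩
    exact ⟨r, by nlinarith⟩
  have h3 : x ^ n * x ^ n = 1 := by rw [← pow_add, ← h2]; congr 1; ring
  exact mul_right_cancel (this.trans h3.symm)

lemma odd_pow_gen (hp : IsPGroup 2 G) (a : G) (s : ℕ) (hs : s % 2 = 1) : a ∈ zpowers (a ^ s) := by
  obtain ⟨n, hn⟩ := order_two_pow hp a
  have : s.Coprime (orderOf a) := by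
    rw [hn]
    exact Nat.Coprime.pow_right _ (Nat.coprime_two_right.2 (Nat.odd_iff.2 hs))
  obtain ⟨m, hm⟩ := exists_pow_eq_self_of_coprime this
  exact mem_zpowers_iff.2 ⟨m, by simpa using hm⟩

end two

section lemmaA
variable {G : Type*} [Group G] [Finite G]

lemma exists_quarter (hp : IsPGroup 2 G) (x : G) (hx : x ^ 2 ≠ 1) :
    ∃ k : ℕ, (x ^ (2 ^ k)) ^ 2 ≠ 1 ∧ (x ^ (2 ^ k)) ^ 4 = 1 := by
  obtain ⟨k, h1, h2⟩ := last_out hp ⊥ (x ^ 2) (by simpa using hx)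
  refine ⟨k, ?_, ?_⟩
  · rw [mem_bot] at h1
    rwa [← pow_mul, mul_comm, pow_mul]
  · rw [mem_bot] at h2
    rw [← h2, ← pow_mul, ← pow_mul, ← pow_mul]
    congr 1; ring

lemma order_four {c : G} (h1 : c ^ 2 ≠ 1) (h2 : c ^ 4 = 1) : orderOf c = 4 :=
  orderOf_eq_prime_pow (p := 2) (n := 1) (by simpa using h1) (by simpa using h2)

lemma mod_four {c : G} (h1 : c ^ 2 ≠ 1) (h2 : c ^ 4 = 1) {r : ℕ} (h : c ^ r = c) : r % 4 = 1 := by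
  have h3 : c ^ r = c ^ 1 := by simpa using h
  rw [pow_eq_pow_iff_modEq, order_four h1 h2] at h3
  exact h3

lemma cyclic_or (hp : IsPGroup 2 G) (t : G) (ht : t ≠ 1) (_ht2 : t ^ 2 = 1)
    (hc : ∀ w : G, w ^ 2 = 1 → w = 1 ∨ w = t) (hcen : ∀ x, x * t = t * x)
    (hno : ∀ x y : G, x ^ 2 = t → y ^ 2 = t → y ∈ zpowers x) :
    ∃ a : G, ∀ x, x ∈ zpowers a := by
  obtain ⟨a, ha⟩ := Finite.exists_max (fun x : G => orderOf x)
  refine ⟨a, ?_⟩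
  by_cases ha2 : a ^ 2 = 1
  · have hat : a = t := by
      rcases hc a ha2 with h | h
      · exfalso
        have := ha t
        simp only [h, orderOf_one] at this
        have h3 := orderOf_pos t
        exact ht (orderOf_eq_one_iff.1 (by omega))
      · exact h
    intro x
    have hx2 : x ^ 2 = 1 := by
      by_contra hcon
      obtain ⟨k, h1, h2⟩ := exists_quarter hp x hcon
      have h3 := order_four h1 h2
      have h4 := ha (x ^ 2 ^ k)
      simp only [h3] at h4
      have := orderOf_le_of_pow_eq_one (by norm_num) ha2
      omega
    rcases hc x hx2 with h | h
    · rw [h]; exact one_mem _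
    · rw [h, ← hat]; exact mem_zpowers _
  by_contra hcon
  push Not at hcon
  have htop : zpowers a < ⊤ := by
    rw [lt_top_iff_ne_top]
    intro h
    obtain ⟨x, hx⟩ := hcon
    exact hx (h ▸ mem_top x)
  have hnil : Group.IsNilpotent G := hp.isNilpotent
  have hnc := Group.normalizerCondition_of_isNilpotent (G := G) (zpowers a) htop
  obtain ⟨b0, hb0, hb0'⟩ := SetLike.exists_of_lt hnc
  obtain ⟨k, hb1, hb2⟩ := last_out hp _ b0 hb0'
  have hb3 := pow_mem hb0 (2 ^ k)
  generalize b0 ^ 2 ^ k = b at hb1 hb2 hb3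
  clear hb0 hb0' hnc
  obtain ⟨ka, hc1, hc2⟩ := exists_quarter hp a ha2
  set c := a ^ 2 ^ ka with hcdef
  have hct : c ^ 2 = t := by
    rcases hc (c ^ 2) (by rw [← pow_mul]; exact hc2) with h | h
    · exact absurd h hc1
    · exact h
  have hca : c ∈ zpowers a := mem_zpowers_iff.2 ⟨2 ^ ka, by rw [hcdef]; norm_cast⟩
  have hta : t ∈ zpowers a := hct ▸ pow_mem hca 2
  have hquart : ∀ y : G, y ^ 4 = 1 → y ∈ zpowers a := by
    intro y hy
    rcases hc (y ^ 2) (by rw [← pow_mul]; exact hy) with h | h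
    · rcases hc y h with h | h
      · rw [h]; exact one_mem _
      · rwa [h]
    · exact zpowers_le.2 hca (hno c y hct h)
  have hb4 : b ^ 2 ≠ 1 := by
    intro h
    exact hb1 (hquart b (by rw [show 4 = 2 * 2 from rfl, pow_mul, h, one_pow]))
  -- b commutes with c
  have hbc : b * c = c * b := by
    obtain ⟨kb, h1, h2⟩ := exists_quarter hp b hb4
    have h3 : (b ^ 2 ^ kb) ^ 2 = t := by
      rcases hc ((b ^ 2 ^ kb) ^ 2) (by rw [← pow_mul]; exact h2) with h | h
      · exact absurd h h1
      · exact h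
    obtain ⟨n, hn⟩ := exists_pow _ _ (hno _ c h3 hct)
    rw [hn, ← pow_mul, ← pow_succ, ← pow_succ']
  obtain ⟨r, hr⟩ := exists_pow a (b * a * b⁻¹) (((mem_normalizer_iff.1 hb3) a).1 (mem_zpowers a))
  have hcr : c ^ r = c := by
    have : b * c * b⁻¹ = c := by rw [hbc]; group
    conv_rhs => rw [← this]
    rw [hcdef, ← conj_pow, hr, ← pow_mul, ← pow_mul, mul_comm]
  have hr4 := mod_four hc1 hc2 hcr
  obtain ⟨s, hs⟩ := exists_pow a _ hb2
  have hse : s % 2 = 0 := by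
    by_contra hodd
    have h1 := odd_pow_gen hp a s (by omega)
    rw [← hs] at h1
    have h2 : orderOf a ∣ orderOf (b ^ 2) := orderOf_dvd_of_mem_zpowers h1
    have h2 := Nat.le_of_dvd (orderOf_pos _) h2
    have h3 := ha b
    obtain ⟨n, hn⟩ := order_two_pow hp b
    have hn1 : n ≠ 0 := by
      rintro rfl
      have : b = 1 := orderOf_eq_one_iff.1 (by simpa using hn)
      exact hb4 (by rw [this]; simp)
    obtain ⟨m, rfl⟩ := Nat.exists_eq_succ_of_ne_zero hn1
    have h5 : orderOf (b ^ 2) = orderOf b / 2 := orderOf_pow_of_dvd (by norm_num) (by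
      rw [hn, pow_succ]; exact Dvd.intro_left _ rfl)
    have := orderOf_pos b
    omega
  obtain ⟨e, rfl⟩ : ∃ e, s = 2 * e := ⟨s / 2, by omega⟩
  obtain ⟨q, rfl⟩ : ∃ q, r = 4 * q + 1 := ⟨r / 4, by omega⟩
  -- express d as a power
  have hd : (a ^ (4 * q)) ^ 2 = 1 := by
    have h1 : b ^ 2 * a * (b ^ 2)⁻¹ = a := by
      rw [hs, ← pow_succ, pow_succ']; group
    have h2 : b ^ 2 * a * (b ^ 2)⁻¹ = a ^ ((4 * q + 1) * (4 * q + 1)) := by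
      calc b ^ 2 * a * (b ^ 2)⁻¹ = b * (b * a * b⁻¹) * b⁻¹ := by rw [pow_two]; group
        _ = _ := by rw [hr, ← conj_pow, hr, ← pow_mul]
    have h3 : a ^ (8 * q * (2 * q + 1) + 1) = a ^ (0 + 1) := by
      rw [zero_add, pow_one]
      conv_rhs => rw [← h1, h2]
      congr 1; ring
    rw [pow_succ, pow_succ a 0] at h3
    have h4 := mul_right_cancel h3
    rw [pow_zero] at h4
    obtain ⟨n, hn⟩ := order_two_pow hp a
    have h5 := orderOf_dvd_of_pow_eq_one h4
    have h6 : (orderOf a).Coprime (2 * q + 1) := by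
      rw [hn]
      exact Nat.Coprime.pow_left _ (Nat.coprime_two_left.2 (by simp))
    have h7 := h6.dvd_of_dvd_mul_right h5
    rw [← pow_mul]
    apply orderOf_dvd_iff_pow_eq_one.1
    convert h7 using 1; ring
  set d := a ^ (4 * q) with hdd
  have hdc : ∀ x, x * d = d * x := by
    intro x
    rcases hc d hd with h | h
    · rw [h]; simp
    · rw [h]; exact hcen x
  have hR : R d b a := R.of_conj hd hdc (by rw [hr, pow_succ'])
  have hR2 := (hR.symm.inv_left).pow_left e
  have h4 := hR2.symm.sq
  have h5 : (b * a⁻¹ ^ e) ^ 2 = d ^ e := by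
    rw [h4, hs, ← pow_mul a⁻¹, inv_pow, mul_comm e 2, mul_inv_cancel, mul_one]
  have h6 : (b * a⁻¹ ^ e) ^ 4 = 1 := by
    rw [show 4 = 2 * 2 from rfl, pow_mul, h5, ← pow_mul, mul_comm, pow_mul, hd, one_pow]
  have h7 := hquart _ h6
  apply hb1
  have h8 := mul_mem h7 (pow_mem (mem_zpowers a) e)
  simpa using h8

end lemmaA

section rank1
variable {G : Type*} [Group G] [Finite G]

/-- The standing hypotheses. -/
structure Hyp (G : Type*) [Group G] : Prop where
  p : IsPGroup 2 G
  cen : ∀ w : G, w ^ 2 = 1 → ∀ x, x * w = w * x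
  sn : HasSN G

lemma sn_pair (H : Hyp G) {a b : G} (ha : ∀ g, g * a * g⁻¹ ∈ zpowers a) (hab : a ∉ zpowers b)
    (g : G) : ∃ m n : ℕ, g * b * g⁻¹ = a ^ m * b ^ n := by
  have hn : (zpowers a).Normal := by
    constructor
    intro n hn g
    obtain ⟨m, rfl⟩ := exists_pow a n hn
    rw [← conj_pow]
    exact pow_mem (ha g) m
  rcases H.sn (zpowers a) hn (zpowers b) with h | h
  · exact absurd (h (mem_zpowers a)) hab
  · have h1 := h.conj_mem b (mem_sup_right (mem_zpowers b)) g
    rw [mem_sup_of_normal_left] at h1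
    obtain ⟨y, hy, z, hz, hyz⟩ := h1
    obtain ⟨m, rfl⟩ := exists_pow a y hy
    obtain ⟨n, rfl⟩ := exists_pow b z hz
    exact ⟨m, n, hyz.symm⟩

lemma invol_mem (hp : IsPGroup 2 G) (K : Subgroup G) (x : G) (hx : x ∈ K) (hx1 : x ≠ 1) :
    ∃ w ∈ K, w ≠ 1 ∧ w ^ 2 = 1 := by
  obtain ⟨k, h1, h2⟩ := last_out hp ⊥ x (by simpa using hx1)
  exact ⟨_, pow_mem hx _, by simpa using h1, by simpa using h2⟩

lemma two_card_le {K L : Subgroup G} (h : K < L) : 2 * Nat.card K ≤ Nat.card L := by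
  obtain ⟨m, hm⟩ := Subgroup.card_dvd_of_le h.le
  have hpos : 0 < Nat.card L := Nat.card_pos
  have h0 : m ≠ 0 := by rintro rfl; omega
  have h1 : m ≠ 1 := by
    rintro rfl
    exact h.ne (Subgroup.eq_of_le_of_card_ge h.le (by omega))
  have : 2 ≤ m := by omega
  rw [hm]
  nlinarith [Nat.card_pos (α := K)]

lemma mem_of_sq {n t x : G} (hp : IsPGroup 2 G) (ht1 : t ≠ 1) (ht : t ^ 2 = 1) (hn : n ^ 2 = t)
    (hx : x ^ 2 = t) (h : x ∈ zpowers n) : n ∈ zpowers x := by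
  obtain ⟨m, rfl⟩ := exists_pow n x h
  apply odd_pow_gen hp
  by_contra hm
  obtain ⟨k, rfl⟩ : ∃ k, m = 2 * k := ⟨m / 2, by omega⟩
  rw [pow_mul, hn, ← pow_mul, mul_comm, pow_mul, ht, one_pow] at hx
  exact ht1 hx.symm

lemma mem_t {t w : G} (ht : t ^ 2 = 1) (h : w ∈ zpowers t) : w = 1 ∨ w = t := by
  obtain ⟨m, rfl⟩ := exists_pow t w h
  rcases Nat.even_or_odd' m with ⟨k, rfl | rfl⟩
  · left; rw [pow_mul, ht, one_pow]
  · right; rw [pow_succ, pow_mul, ht, one_pow, one_mul]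

lemma rank1 (H : Hyp G) (t : G) (ht1 : t ≠ 1) (ht : t ^ 2 = 1)
    (hu : ∀ w : G, w ^ 2 = 1 → w = 1 ∨ w = t) (L N Y : Subgroup G) (hNL : N ≤ L) (hYL : Y ≤ L)
    (hN : ∀ l ∈ L, ∀ n ∈ N, l * n * l⁻¹ ∈ N) (hNY : ¬ N ≤ Y)
    (hW : ¬ ∀ l ∈ L, ∀ w ∈ N ⊔ Y, l * w * l⁻¹ ∈ N ⊔ Y) : False := by
  classical
  have hp := H.p
  have hct := H.cen t ht
  by_cases hno : ∀ x y : G, x ^ 2 = t → y ^ 2 = t → y ∈ zpowers x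
  · obtain ⟨a, ha⟩ := cyclic_or hp t ht1 ht hu hct hno
    apply hW
    intro l _ w hw
    obtain ⟨m, rfl⟩ := exists_pow a l (ha l)
    obtain ⟨n, rfl⟩ := exists_pow a w (ha w)
    rw [← pow_add, add_comm, pow_add, mul_inv_cancel_right]
    exact hw
  push Not at hno
  obtain ⟨x, y, hx, hy, hxy⟩ := hno
  -- normal cyclic subgroup of order four
  have hTn : (zpowers t).Normal := by
    constructor
    intro n hn g
    rcases mem_t ht hn with rfl | rfl
    · simp
    · rw [hct]; simp
  have hxt : x ∉ zpowers t := by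
    intro h
    rcases mem_t ht h with rfl | rfl
    · exact ht1 (by rw [← hx]; simp)
    · exact ht1 (by rw [← hx]; exact ht)
  obtain ⟨n, hn, hnc⟩ : ∃ n : G, n ^ 2 = t ∧ ∀ g, ∃ e, (e = 1 ∨ e = t) ∧ R e g n := by
    have hq : IsPGroup 2 (G ⧸ zpowers t) := hp.to_quotient _
    have : Nontrivial (G ⧸ zpowers t) := by
      refine ⟨⟨(x : G ⧸ zpowers t), 1, ?_⟩⟩
      intro h
      exact hxt ((QuotientGroup.eq_one_iff x).1 h)
    have hcn := hq.center_nontrivial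
    obtain ⟨⟨nb, hnb⟩, hnb1⟩ := exists_ne (1 : center (G ⧸ zpowers t))
    obtain ⟨n0, rfl⟩ := QuotientGroup.mk_surjective nb
    have hn0 : n0 ∉ zpowers t := by
      intro h
      apply hnb1
      ext
      exact (QuotientGroup.eq_one_iff n0).2 h
    obtain ⟨k, hk1, hk2⟩ := last_out hp _ n0 hn0
    have hk3 : ((n0 ^ 2 ^ k : G) : G ⧸ zpowers t) ∈ center (G ⧸ zpowers t) := pow_mem hnb _
    generalize n0 ^ 2 ^ k = n at hk1 hk2 hk3
    refine ⟨n, ?_, ?_⟩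
    · rcases mem_t ht hk2 with h | h
      · exfalso
        rcases hu n h with rfl | rfl
        · exact hk1 (one_mem _)
        · exact hk1 (mem_zpowers _)
      · exact h
    · intro g
      have h1 := (mem_center_iff.1 hk3) (g : G ⧸ zpowers t)
      have h2 : ((n * g : G) : G ⧸ zpowers t) = ((g * n : G) : G ⧸ zpowers t) := h1.symm
      rw [QuotientGroup.eq] at h2
      have h3 : (n * g)⁻¹ * (g * n) = 1 ∨ (n * g)⁻¹ * (g * n) = t := mem_t ht h2
      refine ⟨_, h3, ?_, ?_, ?_⟩
      · rcases h3 with h | h <;> rw [h]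
        · simp
        · exact ht
      · rcases h3 with h | h <;> rw [h]
        · simp
        · exact hct
      · have : ∀ x, x * ((n * g)⁻¹ * (g * n)) = ((n * g)⁻¹ * (g * n)) * x := by
          rcases h3 with h | h <;> rw [h]
          · simp
          · exact hct
        rw [← this]; group
  obtain ⟨y, hy, hny⟩ : ∃ y : G, y ^ 2 = t ∧ y ∉ zpowers n := by
    by_contra hcon
    push Not at hcon
    have h1 := hcon x hx
    have h2 := hcon y hy
    have h3 := mem_of_sq hp ht1 ht hn hx h1
    exact hxy (zpowers_le.2 h3 h2)
  have htn : t ∈ zpowers n := hn ▸ pow_mem (mem_zpowers n) 2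
  have anti : ∀ c : G, c ^ 2 = t → R 1 c n → c ∈ zpowers n := by
    intro c hc hR
    have h1 := hR.sq
    rw [hc, hn, one_mul, ← pow_two, ht] at h1
    have h2 : c * n ∈ zpowers n := by
      rcases hu _ h1 with h | h
      · rw [h]; exact one_mem _
      · rw [h]; exact htn
    simpa using mul_mem h2 (inv_mem (mem_zpowers n))
  have hyn : R t y n := by
    obtain ⟨e, he | he, hR⟩ := hnc y
    · subst he
      exact absurd (anti y hy hR) hny
    · rwa [he] at hR
  have hnn : ∀ g, g * n * g⁻¹ ∈ zpowers n := by
    intro g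
    obtain ⟨e, he, hR⟩ := hnc g
    rw [hR.conj]
    refine mul_mem ?_ (mem_zpowers n)
    rcases he with rfl | rfl
    · exact one_mem _
    · exact htn
  have hnZ : n ∉ zpowers y := fun h => hny (mem_of_sq hp ht1 ht hy hn h)
  have hpw : ∀ (a : G), a ^ 2 = t → ∀ m : ℕ, ∃ e, (e = 1 ∨ e = t) ∧ (a ^ m = e ∨ a ^ m = e * a) := by
    intro a ha m
    rcases Nat.even_or_odd' m with ⟨k, rfl | rfl⟩
    · refine ⟨t ^ k, mem_t ht (pow_mem (mem_zpowers t) k), Or.inl ?_⟩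
      rw [pow_mul, ha]
    · refine ⟨t ^ k, mem_t ht (pow_mem (mem_zpowers t) k), Or.inr ?_⟩
      rw [pow_succ, pow_mul, ha]
  have hyc : ∀ g, g * y * g⁻¹ ∈ ({y, t * y, n * y, t * (n * y)} : Finset G) := by
    intro g
    obtain ⟨p, q, hpq⟩ := sn_pair H hnn hnZ g
    have hnot : g * y * g⁻¹ ∉ zpowers n := by
      intro h
      obtain ⟨m, hm⟩ := exists_pow _ _ h
      apply hny
      have : y = (g⁻¹ * n * g) ^ m := by
        have h5 : (g⁻¹ * n * g) ^ m = g⁻¹ * n ^ m * g := by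
          have := conj_pow (i := m) (a := g⁻¹) (b := n)
          simpa using this
        rw [h5, ← hm]; group
      rw [this]
      have h6 := hnn g⁻¹
      rw [inv_inv] at h6
      exact pow_mem h6 m
    rw [hpq] at hnot ⊢
    obtain ⟨e, he, h1⟩ := hpw n hn p
    obtain ⟨f, hf, h2⟩ := hpw y hy q
    have he' : e ∈ zpowers n := by
      rcases he with rfl | rfl
      · exact one_mem _
      · exact htn
    have hf' : f ∈ zpowers n := by
      rcases hf with rfl | rfl
      · exact one_mem _
      · exact htn
    rcases h2 with h2 | h2
    · exfalso
      apply hnot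
      rw [h2]
      exact mul_mem (pow_mem (mem_zpowers n) p) hf'
    rw [h2]
    have htt : ∀ x, t * (t * x) = x := by intro x; rw [← mul_assoc, ← pow_two, ht, one_mul]
    have hnt : n * (t * y) = t * (n * y) := by rw [← mul_assoc, hct, mul_assoc]
    rcases h1 with h1 | h1 <;> rw [h1] <;> rcases he with rfl | rfl <;> rcases hf with rfl | rfl <;>
      simp [htt, hnt, mul_assoc]
  have hC : ∀ g : G, g * n * g⁻¹ = n → g * y * g⁻¹ = y → g = 1 ∨ g = t := by
    intro g h1 h2
    by_contra hcon
    have hg2 : g ^ 2 ≠ 1 := fun h => hcon (hu g h)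
    obtain ⟨k, hk1, hk2⟩ := exists_quarter hp g hg2
    have hcn : Commute (g ^ 2 ^ k) n := Commute.pow_left (mul_inv_eq_iff_eq_mul.1 h1) _
    have hcy : Commute (g ^ 2 ^ k) y := Commute.pow_left (mul_inv_eq_iff_eq_mul.1 h2) _
    have hct2 : (g ^ 2 ^ k) ^ 2 = t := by
      rcases hu _ (show ((g ^ 2 ^ k) ^ 2) ^ 2 = 1 by rw [← pow_mul]; exact hk2) with h | h
      · exact absurd h hk1
      · exact h
    have h3 := anti _ hct2 (R.of_comm hcn)
    have h4 := mem_of_sq hp ht1 ht hn hct2 h3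
    obtain ⟨m, hm⟩ := exists_pow _ _ h4
    have h5 : Commute n y := by
      rw [hm]; exact hcy.pow_left m
    exact ht1 (hyn.symm.unique (R.of_comm h5))
  -- the order of G is at most 16
  have hcard : Nat.card G ≤ 16 := by
    have := Fintype.ofFinite G
    rw [Nat.card_eq_fintype_card, ← Finset.card_univ]
    let f : G → G × G := fun g => (g * n * g⁻¹, g * y * g⁻¹)
    have h1 : (Finset.univ : Finset G).card ≤ 2 * (Finset.univ.image f).card := by
      apply Finset.card_le_mul_card_image
      intro b hb
      obtain ⟨g, -, rfl⟩ := Finset.mem_image.1 hb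
      have hsub : (Finset.univ.filter (fun x => f x = f g)) ⊆ {g, g * t} := by
        intro x hx
        simp only [Finset.mem_filter, Finset.mem_univ, true_and, f, Prod.mk.injEq] at hx
        have h3 := hC (g⁻¹ * x)
          (by
            calc g⁻¹ * x * n * (g⁻¹ * x)⁻¹ = g⁻¹ * (x * n * x⁻¹) * g := by group
              _ = n := by rw [hx.1]; group)
          (by
            calc g⁻¹ * x * y * (g⁻¹ * x)⁻¹ = g⁻¹ * (x * y * x⁻¹) * g := by group
              _ = y := by rw [hx.2]; group)
        rcases h3 with h3 | h3
        · have : x = g := by rw [inv_mul_eq_one] at h3; exact h3.symm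
          simp [this]
        · have : x = g * t := by rw [← h3]; group
          simp [this]
      exact (Finset.card_le_card hsub).trans Finset.card_le_two
    have h2 : (Finset.univ.image f) ⊆ ({n, t * n} : Finset G) ×ˢ ({y, t * y, n * y, t * (n * y)} : Finset G) := by
      intro b hb
      obtain ⟨g, -, rfl⟩ := Finset.mem_image.1 hb
      rw [Finset.mem_product]
      refine ⟨?_, hyc g⟩
      obtain ⟨e, he, hR⟩ := hnc g
      simp only [f, hR.conj]
      rcases he with rfl | rfl <;> simp
    have h3 := Finset.card_le_card h2
    rw [Finset.card_product] at h3
    have h4 : ({n, t * n} : Finset G).card ≤ 2 := Finset.card_le_two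
    have h5 : ({y, t * y, n * y, t * (n * y)} : Finset G).card ≤ 4 := Finset.card_le_four
    nlinarith
  have htmem : ∀ K : Subgroup G, ∀ x ∈ K, x ≠ 1 → t ∈ K := by
    intro K x hx hx1
    obtain ⟨w, hw, hw1, hw2⟩ := invol_mem hp K x hx hx1
    rcases hu w hw2 with h | h
    · exact absurd h hw1
    · rwa [← h]
  have hWN : N ⊔ Y ≠ N := by
    intro h
    apply hW
    rw [h]
    exact hN
  have htN : t ∈ N := by
    obtain ⟨x, hx, hx'⟩ := SetLike.not_le_iff_exists.1 hNY
    exact htmem N x hx (by rintro rfl; exact hx' (one_mem _))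
  have hYt : ¬ Y ≤ zpowers t := by
    intro h
    exact hWN (sup_eq_left.2 (h.trans (zpowers_le.2 htN)))
  have h1 : zpowers t < Y := by
    obtain ⟨x, hx, hx'⟩ := SetLike.not_le_iff_exists.1 hYt
    have := htmem Y x hx (by rintro rfl; exact hx' (one_mem _))
    exact lt_of_le_not_ge (zpowers_le.2 this) hYt
  have h2 : Y < N ⊔ Y := by
    refine lt_of_le_not_ge le_sup_right ?_
    intro h
    exact hNY (le_sup_left.trans h)
  have h3 : N ⊔ Y < L := by
    refine lt_of_le_of_ne (sup_le hNL hYL) ?_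
    intro h
    apply hW
    rw [h]
    intro l hl w hw
    exact mul_mem (mul_mem hl hw) (inv_mem hl)
  have c1 := two_card_le h1
  have c2 := two_card_le h2
  have c3 := two_card_le h3
  have c4 : Nat.card (zpowers t) = 2 := by
    rw [Nat.card_zpowers]; exact orderOf_eq_prime ht ht1
  have hL : L = ⊤ := Subgroup.eq_top_of_le_card L (by omega)
  subst hL
  have hNn : N.Normal := ⟨fun n hn g => hN g (mem_top g) n hn⟩
  rcases H.sn N hNn Y with h | h
  · exact hNY h
  · exact hW fun l _ w hw => h.conj_mem w hw l

end rank1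

section reduce
variable {G : Type*} [Group G] [Finite G]

lemma conj_s (H : Hyp G) {s x : G} (hs : s ^ 2 = 1) (hsx : s ∉ zpowers x) (g : G) :
    ∃ n : ℕ, g * x * g⁻¹ = x ^ n ∨ g * x * g⁻¹ = x ^ n * s := by
  have hcs := H.cen s hs
  obtain ⟨m, n, h⟩ := sn_pair H (a := s) (b := x) (by
    intro g
    rw [hcs, mul_inv_cancel_right]
    exact mem_zpowers s) hsx g
  refine ⟨n, ?_⟩
  rcases mem_t hs (pow_mem (mem_zpowers s) m) with h1 | h1
  · left; rw [h, h1, one_mul]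
  · right; rw [h, h1, hcs]

lemma chain_aux (hp : IsPGroup 2 G) (a : G) (m : ℕ) :
    ∃ p : ℕ, a ^ m ∈ zpowers (a ^ 2 ^ p) ∧ a ^ 2 ^ p ∈ zpowers (a ^ m) := by
  rcases Nat.eq_zero_or_pos m with rfl | hm
  · obtain ⟨k, hk⟩ := (isPGroup_iff_pow_pow_eq_one.1 hp) a
    exact ⟨k, by simp [hk], by simp [hk]⟩
  · obtain ⟨p, r, hr, rfl⟩ := Nat.exists_eq_two_pow_mul_odd hm.ne'
    refine ⟨p, ?_, ?_⟩
    · rw [pow_mul]; exact pow_mem (mem_zpowers _) r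
    · rw [pow_mul]; exact odd_pow_gen hp _ r (Nat.odd_iff.1 hr)

lemma chain (hp : IsPGroup 2 G) (a : G) (m n : ℕ) :
    a ^ m ∈ zpowers (a ^ n) ∨ a ^ n ∈ zpowers (a ^ m) := by
  obtain ⟨p, h1, h2⟩ := chain_aux hp a m
  obtain ⟨q, h3, h4⟩ := chain_aux hp a n
  rcases le_total p q with h | h
  · right
    obtain ⟨d, rfl⟩ := Nat.exists_eq_add_of_le h
    have h5 : a ^ 2 ^ (p + d) ∈ zpowers (a ^ m) := by
      rw [pow_add, pow_mul]; exact pow_mem h2 _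
    exact zpowers_le.2 h5 h3
  · left
    obtain ⟨d, rfl⟩ := Nat.exists_eq_add_of_le h
    have h5 : a ^ 2 ^ (q + d) ∈ zpowers (a ^ n) := by
      rw [pow_add, pow_mul]; exact pow_mem h4 _
    exact zpowers_le.2 h5 h1

lemma reduce (H : Hyp G) (L N Y : Subgroup G) (hNL : N ≤ L) (hYL : Y ≤ L)
    (hN : ∀ l ∈ L, ∀ n ∈ N, l * n * l⁻¹ ∈ N) (hNY : ¬ N ≤ Y)
    (hW : ¬ ∀ l ∈ L, ∀ w ∈ N ⊔ Y, l * w * l⁻¹ ∈ N ⊔ Y) :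
    ∃ t z i j : G, t ≠ 1 ∧ t ^ 2 = 1 ∧ z ≠ 1 ∧ z ^ 2 = 1 ∧ z ≠ t ∧
      (∀ w : G, w ^ 2 = 1 → w = 1 ∨ w = t ∨ w = z ∨ w = t * z) ∧
      i ^ 2 = t ∧ j ^ 2 = t ∧ R t i j ∧
      ¬ ∀ g, (g * i * g⁻¹ = i ∨ g * i * g⁻¹ = t * i) ∧ (g * j * g⁻¹ = j ∨ g * j * g⁻¹ = t * j) := by
  have hp := H.p
  obtain ⟨x0, hx0N, hx0Y⟩ := SetLike.not_le_iff_exists.1 hNY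
  obtain ⟨t, htN, ht1, ht⟩ := invol_mem hp N x0 hx0N (by rintro rfl; exact hx0Y (one_mem _))
  have hct := H.cen t ht
  obtain ⟨z, hz, hz1t⟩ : ∃ z : G, z ^ 2 = 1 ∧ ¬ (z = 1 ∨ z = t) := by
    by_contra hcon
    push Not at hcon
    refine rank1 H t ht1 ht ?_ L N Y hNL hYL hN hNY hW
    intro w hw
    have := hcon w hw
    tauto
  push Not at hz1t
  obtain ⟨hz1, hzt⟩ := hz1t
  have hWN : N ⊔ Y ≠ N := by
    intro h
    apply hW
    rw [h]
    exact hN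
  obtain ⟨y0, hy0Y, hy0N⟩ := SetLike.not_le_iff_exists.1
    (show ¬ Y ≤ N from fun h => hWN (sup_eq_left.2 h))
  have hNW : N ≤ N ⊔ Y := le_sup_left
  have hYW : Y ≤ N ⊔ Y := le_sup_right
  have hx0W := hNW hx0N
  have hy0W := hYW hy0Y
  have hxy0 : x0 ∉ zpowers y0 := fun h => hx0Y (zpowers_le.2 hy0Y h)
  have hyx0 : y0 ∉ zpowers x0 := fun h => hy0N (zpowers_le.2 hx0N h)
  have htW := hNW htN
  have hW' : ¬ ∀ g, ∀ w ∈ N ⊔ Y, g * w * g⁻¹ ∈ N ⊔ Y := fun h => hW fun l _ => h l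
  generalize N ⊔ Y = W at *
  clear hW hN hNY hNL hYL hWN
  -- unique involution
  have huW : ∀ w ∈ W, w ^ 2 = 1 → w = 1 ∨ w = t := by
    intro w hw hw2
    by_contra hcon
    push Not at hcon
    apply hW'
    intro g x hx
    have key : ∀ s ∈ W, s ^ 2 = 1 → s ∉ zpowers x → g * x * g⁻¹ ∈ W := by
      intro s hsW hs hsx
      obtain ⟨n, h | h⟩ := conj_s H hs hsx g
      · rw [h]; exact pow_mem hx n
      · rw [h]; exact mul_mem (pow_mem hx n) hsW
    by_cases h1 : t ∈ zpowers x
    · by_cases h2 : w ∈ zpowers x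
      · exact absurd (unique_invol x w t h2 h1 hw2 ht hcon.1 ht1) hcon.2
      · exact key w hw hw2 h2
    · exact key t htW ht h1
  have hconj : ∀ s : G, s ^ 2 = 1 → s ≠ 1 → s ≠ t → ∀ x ∈ W, ∀ g,
      ∃ n : ℕ, g * x * g⁻¹ = x ^ n ∨ g * x * g⁻¹ = x ^ n * s := by
    intro s hs hs1 hst x hx g
    apply conj_s H hs
    intro h
    rcases huW s (zpowers_le.2 hx h) hs with h | h
    · exact hs1 h
    · exact hst h
  have hzW : z ∉ W := by
    intro h
    rcases huW z h hz with h | h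
    · exact hz1 h
    · exact hzt h
  have hrank : ∀ w : G, w ^ 2 = 1 → w = 1 ∨ w = t ∨ w = z ∨ w = t * z := by
    intro s hs
    by_contra hcon
    push Not at hcon
    obtain ⟨hs1, hst, hsz, hstz⟩ := hcon
    apply hW'
    intro g x hx
    obtain ⟨n, h | h⟩ := hconj z hz hz1 hzt x hx g
    · rw [h]; exact pow_mem hx n
    obtain ⟨m, h' | h'⟩ := hconj s hs hs1 hst x hx g
    · rw [h']; exact pow_mem hx m
    exfalso
    have h1 : s * z⁻¹ ∈ W := by
      have : s * z⁻¹ = (x ^ m)⁻¹ * x ^ n := by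
        have h2 : x ^ n * z = x ^ m * s := h.symm.trans h'
        rw [mul_inv_eq_iff_eq_mul, mul_assoc, h2]; group
      rw [this]
      exact mul_mem (inv_mem (pow_mem hx m)) (pow_mem hx n)
    have h2 : z⁻¹ = z := by rw [inv_eq_iff_mul_eq_one, ← pow_two, hz]
    rw [h2] at h1
    rcases huW _ h1 (mul_sq_central hs hz (H.cen s hs)) with h3 | h3
    · apply hsz
      rw [← h2]; exact eq_inv_of_mul_eq_one_left h3
    · apply hstz
      rw [← h3, mul_assoc, ← pow_two, hz, mul_one]
  have hded : ∀ x ∈ W, ∀ g ∈ W, g * x * g⁻¹ ∈ zpowers x := by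
    intro x hx g hg
    obtain ⟨n, h | h⟩ := hconj z hz hz1 hzt x hx g
    · rw [h]; exact pow_mem (mem_zpowers x) n
    · exfalso
      apply hzW
      have : z = (x ^ n)⁻¹ * (g * x * g⁻¹) := by rw [h]; group
      rw [this]
      exact mul_mem (inv_mem (pow_mem hx n)) (mul_mem (mul_mem hg hx) (inv_mem hg))
  -- elements of order 4
  obtain ⟨x, hxW, y, hyW, hx, hy, hyx⟩ : ∃ x ∈ W, ∃ y ∈ W, x ^ 2 = t ∧ y ^ 2 = t ∧ y ∉ zpowers x := by
    by_contra hcon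
    push Not at hcon
    obtain ⟨a, ha⟩ := cyclic_or (G := W) (hp.to_subgroup W) ⟨t, htW⟩
      (by intro h; exact ht1 (congrArg Subtype.val h))
      (by ext; exact ht)
      (by
        rintro ⟨w, hw⟩ h
        rcases huW w hw (congrArg Subtype.val h) with h | h
        · left; ext; exact h
        · right; ext; exact h)
      (by rintro ⟨x, hx⟩; ext; exact hct x)
      (by
        rintro ⟨x, hx⟩ ⟨y, hy⟩ h1 h2
        obtain ⟨m, hm⟩ := exists_pow _ _ (hcon x hx y hy (congrArg Subtype.val h1)
          (congrArg Subtype.val h2))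
        exact mem_zpowers_iff.2 ⟨m, by ext; simp [hm]⟩)
    obtain ⟨m, hm⟩ := exists_pow _ _ (ha ⟨x0, hx0W⟩)
    obtain ⟨n, hn⟩ := exists_pow _ _ (ha ⟨y0, hy0W⟩)
    have hm := congrArg Subtype.val hm
    have hn := congrArg Subtype.val hn
    simp only [SubmonoidClass.coe_pow] at hm hn
    rcases chain hp (a : G) m n with h | h
    · rw [← hm, ← hn] at h; exact hxy0 h
    · rw [← hm, ← hn] at h; exact hyx0 h
  have htz : ∀ v : G, v ^ 2 = t → t ∈ zpowers v := fun v hv => hv ▸ pow_mem (mem_zpowers v) 2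
  have hcomm : ∀ u ∈ W, ∀ v ∈ W, u ^ 2 = t → v ^ 2 = t → R 1 u v → v ∈ zpowers u := by
    intro u hu v hv hu2 hv2 hR
    have h1 := hR.sq
    rw [hu2, hv2, one_mul, ← pow_two, ht] at h1
    have h2 : u * v ∈ zpowers u := by
      rcases huW _ (mul_mem hu hv) h1 with h | h
      · rw [h]; exact one_mem _
      · rw [h]; exact htz u hu2
    simpa using mul_mem (inv_mem (mem_zpowers u)) h2
  have hRR : ∀ u ∈ W, ∀ v ∈ W, v ^ 2 = t → R 1 u v ∨ R t u v := by
    intro u hu v hv hv2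
    obtain ⟨r, hr⟩ := exists_pow _ _ (hded v hv u hu)
    have h1 : (u * v * u⁻¹) ^ 2 = t := by
      rw [conj_pow, hv2, hct, mul_inv_cancel_right]
    rcases Nat.even_or_odd' r with ⟨k, rfl | rfl⟩
    · exfalso
      rw [hr, pow_mul, hv2, ← pow_mul, mul_comm, pow_mul, ht, one_pow] at h1
      exact ht1 h1.symm
    · rw [pow_succ', pow_mul, hv2] at hr
      rcases mem_t ht (pow_mem (mem_zpowers t) k) with h | h <;> rw [h] at hr
      · exact Or.inl (R.of_conj (by simp) (by simp) hr)
      · exact Or.inr (R.of_conj ht hct hr)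
  have hRxy : R t x y := by
    rcases hRR x hxW y hyW hy with h | h
    · exact absurd (hcomm x hxW y hyW hx hy h) hyx
    · exact h
  refine ⟨t, z, x, y, ht1, ht, hz1, hz, hzt, hrank, hx, hy, hRxy, ?_⟩
  intro hnorm
  have hgen : ∀ w ∈ W, w ∈ closure {x, y} := by
    have hxc : x ∈ closure {x, y} := subset_closure (by simp)
    have hyc : y ∈ closure {x, y} := subset_closure (by simp)
    have htc : t ∈ closure {x, y} := hx ▸ pow_mem hxc 2
    have h4 : ∀ w ∈ W, w ^ 2 = t → w ∈ closure {x, y} := by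
      intro w hw hw2
      rcases hRR w hw x hxW hx with h | h
      · exact zpowers_le.2 hxc (hcomm x hxW w hw hx hw2 h.symm)
      rcases hRR w hw y hyW hy with h' | h'
      · exact zpowers_le.2 hyc (hcomm y hyW w hw hy hw2 h'.symm)
      have h5 := h.mul_right h'
      rw [← pow_two, ht] at h5
      have h6 : (x * y) ^ 2 = t := by
        rw [hRxy.sq, hx, hy, ← pow_two, ht, mul_one]
      exact zpowers_le.2 (mul_mem hxc hyc) (hcomm _ (mul_mem hxW hyW) w hw h6 hw2 h5.symm)
    intro w hw
    by_cases hw1 : w ^ 2 = 1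
    · rcases huW w hw hw1 with h | h
      · rw [h]; exact one_mem _
      · rw [h]; exact htc
    by_cases hw2 : w ^ 2 = t
    · exact h4 w hw hw2
    exfalso
    obtain ⟨k, hk1, hk2⟩ := exists_quarter hp w hw1
    obtain _ | k := k
    · rw [pow_zero, pow_one] at hk2
      rcases huW (w ^ 2) (pow_mem hw 2) (by rw [← pow_mul]; exact hk2) with h | h
      · exact hw1 h
      · exact hw2 h
    have hcW := pow_mem hw (2 ^ (k + 1))
    have hct2 : (w ^ 2 ^ (k + 1)) ^ 2 = t := by
      rcases huW _ (pow_mem hcW 2) (by rw [← pow_mul]; exact hk2) with h | h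
      · exact absurd h hk1
      · exact h
    obtain ⟨v, hvW, hv2, hRv⟩ : ∃ v ∈ W, v ^ 2 = t ∧ R t v (w ^ 2 ^ (k + 1)) := by
      rcases hRR _ hxW _ hcW hct2 with h | h
      · rcases hRR _ hyW _ hcW hct2 with h' | h'
        · exfalso
          have h1 := hcomm _ hcW _ hxW hct2 hx h.symm
          have h2 := hcomm _ hcW _ hyW hct2 hy h'.symm
          obtain ⟨m, hm⟩ := exists_pow _ _ h1
          obtain ⟨n, hn⟩ := exists_pow _ _ h2
          have h3 : x * y = y * x := by
            rw [hm, hn, ← pow_add, ← pow_add, add_comm m n]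
          exact ht1 (hRxy.unique (R.of_comm h3))
        · exact ⟨y, hyW, hy, h'⟩
      · exact ⟨x, hxW, hx, h⟩
    have hnc : ¬ v * w ^ 2 ^ (k + 1) = w ^ 2 ^ (k + 1) * v := fun h =>
      ht1 (hRv.unique (R.of_comm h))
    have hd1 : v * w * v⁻¹ * w⁻¹ ∈ zpowers w :=
      mul_mem (hded w hw v hvW) (inv_mem (mem_zpowers w))
    have hd2 : v * w * v⁻¹ * w⁻¹ ∈ zpowers v := by
      have := mul_mem (mem_zpowers v) (inv_mem (hded v hvW w hw))
      convert this using 1; group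
    obtain ⟨m, hm⟩ := exists_pow _ _ hd2
    rcases Nat.even_or_odd m with he | ho
    · obtain ⟨q, rfl⟩ := even_iff_two_dvd.1 he
      rw [pow_mul, hv2] at hm
      have hR2 : R (t ^ q) v w := by
        refine ⟨by rw [← pow_mul, mul_comm, pow_mul, ht, one_pow], ?_, ?_⟩
        · rcases mem_t ht (pow_mem (mem_zpowers t) q) with h | h <;> rw [h]
          · simp
          · exact hct
        · rw [← hm]; group
      have h5 : Commute (w ^ 2) v := hR2.symm.sq_comm
      apply hnc
      rw [pow_succ', pow_mul]
      exact (h5.pow_left _).symm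
    · have h5 := odd_pow_gen hp v m (Nat.odd_iff.1 ho)
      rw [← hm] at h5
      obtain ⟨n, hn⟩ := exists_pow _ _ (zpowers_le.2 hd1 h5)
      apply hnc
      rw [hn, ← pow_add, ← pow_add, add_comm]
  apply hW'
  intro g w hw
  have hle : closure {x, y} ≤ W.comap (MulAut.conj g).toMonoidHom := by
    rw [closure_le]
    rintro v (rfl | rfl)
    · change g * v * g⁻¹ ∈ W
      rcases (hnorm g).1 with h | h <;> rw [h]
      · exact hxW
      · exact mul_mem htW hxW
    · change g * v * g⁻¹ ∈ W
      rcases (hnorm g).2 with h | h <;> rw [h]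
      · exact hyW
      · exact mul_mem htW hyW
  exact hle (hgen w hw)

end reduce

section core
variable {G : Type*} [Group G] [Finite G]

/-- `a` is normalised by `g` modulo `t`. -/
def Tg (t g a : G) : Prop := R 1 g a ∨ R t g a

lemma Tg.mul_left {t g g' a : G} (h : Tg t g a) (h' : Tg t g' a) : Tg t (g * g') a := by
  rcases h with h | h <;> rcases h' with h' | h'
  · left; simpa using h.mul_left h'
  · right; simpa using h.mul_left h'
  · right; simpa using h.mul_left h'
  · left
    have := h.mul_left h'
    rwa [← pow_two, h.1] at this

lemma Tg.symm {t g a : G} (h : Tg t g a) : Tg t a g := h.imp R.symm R.symm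

lemma Tg.mul_right {t g a b : G} (h : Tg t g a) (h' : Tg t g b) : Tg t g (a * b) :=
  (h.symm.mul_left h'.symm).symm

lemma Tg.inv_left {t g a : G} (h : Tg t g a) : Tg t g⁻¹ a := h.imp R.inv_left R.inv_left

/-- The configuration obtained from `reduce`. -/
structure Cfg (t z i j : G) : Prop where
  H : Hyp G
  t1 : t ≠ 1
  t2 : t ^ 2 = 1
  z1 : z ≠ 1
  z2 : z ^ 2 = 1
  zt : z ≠ t
  om : ∀ w : G, w ^ 2 = 1 → w = 1 ∨ w = t ∨ w = z ∨ w = t * z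
  i2 : i ^ 2 = t
  j2 : j ^ 2 = t
  rij : R t i j
  nn : ¬ ∀ g, Tg t g i ∧ Tg t g j

lemma conj_om {t z i j : G} (C : Cfg t z i j) (x g : G) :
    ∃ (n : ℕ) (e : G), e ^ 2 = 1 ∧ g * x * g⁻¹ = x ^ n * e := by
  have key : ∀ s : G, s ^ 2 = 1 → s ∉ zpowers x → ∃ (n : ℕ) (e : G), e ^ 2 = 1 ∧ g * x * g⁻¹ = x ^ n * e := by
    intro s hs hsx
    obtain ⟨n, h | h⟩ := conj_s C.H hs hsx g
    · exact ⟨n, 1, by simp, by simpa using h⟩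
    · exact ⟨n, s, hs, h⟩
  by_cases h1 : t ∈ zpowers x
  · by_cases h2 : z ∈ zpowers x
    · exact absurd (unique_invol x z t h2 h1 C.z2 C.t2 C.z1 C.t1) C.zt
    · exact key z C.z2 h2
  · exact key t C.t2 h1

lemma sq_sq {x : G} (h : x ^ 4 = 1) : (x ^ 2) ^ 2 = 1 := by rw [← pow_mul]; exact h

lemma pow_four {x : G} (h : (x ^ 2) ^ 2 = 1) : x ^ 4 = 1 := by rw [← h, ← pow_mul]

lemma order4 {t z i j : G} (C : Cfg t z i j) {x : G} (hx : x ^ 4 = 1) (g : G) : ∃ e, R e g x := by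
  by_cases hx2 : x ^ 2 = 1
  · exact ⟨1, R.of_comm (C.H.cen x hx2 g)⟩
  obtain ⟨n, e, he, h⟩ := conj_om C x g
  have hc := C.H.cen (x ^ 2) (sq_sq hx) g
  have h1 : (g * x * g⁻¹) ^ 2 = x ^ 2 := by rw [conj_pow, hc, mul_inv_cancel_right]
  have hce := C.H.cen e he
  rw [h, Commute.mul_pow (hce _), he, mul_one] at h1
  rcases Nat.even_or_odd' n with ⟨k, rfl | rfl⟩
  · exfalso
    apply hx2
    rw [← h1, ← pow_mul, show 2 * k * 2 = 4 * k by ring, pow_mul, hx, one_pow]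
  · have h2 : ((x ^ 2) ^ k) ^ 2 = 1 := by
      rw [← pow_mul, mul_comm, pow_mul, sq_sq hx, one_pow]
    have h3 : ((x ^ 2) ^ k * e) ^ 2 = 1 := mul_sq_central h2 he (C.H.cen _ h2)
    refine ⟨(x ^ 2) ^ k * e, R.of_conj h3 (C.H.cen _ h3) ?_⟩
    rw [h, pow_succ', pow_mul, mul_assoc]

/-- If `a` spans a normal subgroup then so does `b`. -/
lemma nn_aux {t z i j : G} (C : Cfg t z i j) {u a b : G} (hu1 : u ≠ 1) (hu : u ^ 2 = 1)
    (ha : a ^ 2 = u) (hb : b ^ 2 = u) (hR : R u a b) (hall : ∀ g, Tg u g a) (g : G) : Tg u g b := by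
  have hua : u ∈ zpowers a := ha ▸ pow_mem (mem_zpowers a) 2
  have hcu := C.H.cen u hu
  obtain ⟨m, n, h⟩ := sn_pair C.H (a := a) (b := b) (by
    intro g
    rcases hall g with h | h
    · rw [h.conj]; simp
    · rw [h.conj]; exact mul_mem hua (mem_zpowers a)) (by
    intro h
    obtain ⟨m, hm⟩ := exists_pow _ _ h
    apply hu1
    apply hR.unique
    apply R.of_comm
    rw [hm, ← pow_succ, ← pow_succ']) g
  obtain ⟨e, he⟩ := order4 C (pow_four (by rw [hb, hu])) (x := b) g
  have key : ∀ (x : G), x ^ 2 = u → ∀ m : ℕ, ∃ f, (f = 1 ∨ f = u) ∧ (x ^ m = f ∨ x ^ m = f * x) := by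
    intro x hx m
    rcases Nat.even_or_odd' m with ⟨k, rfl | rfl⟩
    · refine ⟨u ^ k, mem_t hu (pow_mem (mem_zpowers u) k), Or.inl ?_⟩
      rw [pow_mul, hx]
    · refine ⟨u ^ k, mem_t hu (pow_mem (mem_zpowers u) k), Or.inr ?_⟩
      rw [pow_succ, pow_mul, hx]
  obtain ⟨f1, hf1, h1⟩ := key a ha m
  obtain ⟨f2, hf2, h2⟩ := key b hb n
  have h3 : e * b = a ^ m * b ^ n := by rw [← he.conj, h]
  have hf : (f1 * f2) = 1 ∨ f1 * f2 = u := by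
    rcases hf1 with rfl | rfl <;> rcases hf2 with rfl | rfl <;> simp [← pow_two, hu]
  have hfu : f2 * u = 1 ∨ f2 * u = u := by
    rcases hf2 with rfl | rfl <;> simp [← pow_two, hu]
  have hcf : ∀ x f : G, (f = 1 ∨ f = u) → x * f = f * x := by
    rintro x f (rfl | rfl)
    · simp
    · exact hcu x
  have hsq : ∀ x f : G, (f = 1 ∨ f = u) → x ^ 2 = u → (f * x) ^ 2 = u := by
    rintro x f (rfl | rfl) hx
    · simpa using hx
    · have : Commute f x := (hcu x).symm
      rw [this.mul_pow, hu, hx, one_mul]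
  have hee : e ^ 2 ≠ u := by rw [he.1]; exact hu1.symm
  have hab : (a * b) ^ 2 = u := by
    rw [hR.sq, ha, hb, ← pow_two, hu, mul_one]
  have huu : u⁻¹ = u := by rw [inv_eq_iff_mul_eq_one, ← pow_two, hu]
  have hbinv : b⁻¹ = b * u := by rw [← hb, ← mul_right_inj b, mul_inv_cancel, hb, ← mul_assoc, ← pow_two, hb, ← pow_two, hu]
  rw [← eq_mul_inv_iff_mul_eq] at h3
  have hconc : (e = 1 ∨ e = u) → Tg u g b := by
    rintro (rfl | rfl)
    · exact Or.inl he
    · exact Or.inr he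
  rcases h1 with h1 | h1 <;> rcases h2 with h2 | h2 <;> rw [h1, h2] at h3
  · exfalso
    apply hee
    rw [h3, hbinv]
    rw [show f1 * f2 * (b * u) = (f1 * (f2 * u)) * b by
      rw [hcu b]; simp only [mul_assoc]]
    apply hsq _ _ _ hb
    rcases hf1 with rfl | rfl <;> rcases hfu with h | h <;> rw [h] <;> simp [← pow_two, hu]
  · apply hconc
    rw [h3]
    simpa [mul_assoc] using hf
  · exfalso
    apply hee
    rw [h3, hbinv]
    rw [show f1 * a * f2 * (b * u) = (f1 * (f2 * u)) * (a * b) by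
      rw [hcu b, mul_assoc f1, hcf a f2 hf2]
      simp only [mul_assoc]
      rw [← mul_assoc a u b, hcu a, mul_assoc]]
    apply hsq _ _ _ hab
    rcases hf1 with rfl | rfl <;> rcases hfu with h | h <;> rw [h] <;> simp [← pow_two, hu]
  · exfalso
    apply hee
    rw [h3]
    rw [show f1 * a * (f2 * b) * b⁻¹ = (f1 * f2) * a by
      rw [← mul_assoc, mul_inv_cancel_right, mul_assoc, hcf a f2 hf2, mul_assoc]]
    exact hsq _ _ hf ha

lemma Cfg.om' {t z i j : G} (C : Cfg t z i j) {x : G} (hx : x ^ 4 = 1) {g : G} (h : ¬ Tg t g x) :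
    R z g x ∨ R (t * z) g x := by
  obtain ⟨e, he⟩ := order4 C hx g
  rcases C.om e he.1 with rfl | rfl | rfl | rfl
  · exact absurd (Or.inl he) h
  · exact absurd (Or.inr he) h
  · exact Or.inl he
  · exact Or.inr he

lemma Cfg.tz {t z i j : G} (C : Cfg t z i j) : z * t = t * z := C.H.cen t C.t2 z

lemma Cfg.prods {t z i j : G} (C : Cfg t z i j) :
    z * z = 1 ∧ z * (t * z) = t ∧ t * z * z = t ∧ t * z * (t * z) = 1 ∧ t * t = 1 ∧ t * (t * z) = z
    ∧ t * z * t = z := by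
  have h1 : z * z = 1 := by rw [← pow_two, C.z2]
  have h2 : t * t = 1 := by rw [← pow_two, C.t2]
  have h3 := C.tz
  have h4 : z * (t * z) = t := by rw [← mul_assoc, h3, mul_assoc, h1, mul_one]
  refine ⟨h1, h4, by rw [mul_assoc, h1, mul_one], ?_, h2, by rw [← mul_assoc, h2, one_mul], ?_⟩
  · rw [mul_assoc, h4, h2]
  · rw [mul_assoc, h3, ← mul_assoc, h2, one_mul]

lemma Cfg.nn_mul {t z i j : G} (C : Cfg t z i j) {x : G} (hx : x ^ 4 = 1) {g g' : G}
    (h : ¬ Tg t g x) (h' : ¬ Tg t g' x) : Tg t (g * g') x := by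
  obtain ⟨p1, p2, p3, p4, p5, p6, p7⟩ := C.prods
  rcases C.om' hx h with h | h <;> rcases C.om' hx h' with h' | h' <;> have := h.mul_left h'
  · rw [p1] at this; exact Or.inl this
  · rw [p2] at this; exact Or.inr this
  · rw [p3] at this; exact Or.inr this
  · rw [p4] at this; exact Or.inl this

lemma Cfg.nn_mul_right {t z i j : G} (C : Cfg t z i j) {x y : G} (hx : x ^ 4 = 1) (hy : y ^ 4 = 1)
    {g : G} (h : ¬ Tg t g x) (h' : ¬ Tg t g y) : Tg t g (x * y) := by
  obtain ⟨p1, p2, p3, p4, p5, p6, p7⟩ := C.prods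
  rcases C.om' hx h with h | h <;> rcases C.om' hy h' with h' | h' <;> have := h.mul_right h'
  · rw [p1] at this; exact Or.inl this
  · rw [p2] at this; exact Or.inr this
  · rw [p3] at this; exact Or.inr this
  · rw [p4] at this; exact Or.inl this

lemma Tg.not_mul {t g g' x : G} (h : ¬ Tg t g x) (h' : Tg t g' x) : ¬ Tg t (g * g') x := by
  intro h1
  apply h
  have := h1.mul_left h'.inv_left
  simpa using this

lemma Cfg.i4 {t z i j : G} (C : Cfg t z i j) : i ^ 4 = 1 := pow_four (by rw [C.i2, C.t2])
lemma Cfg.j4 {t z i j : G} (C : Cfg t z i j) : j ^ 4 = 1 := pow_four (by rw [C.j2, C.t2])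
lemma Cfg.ij2 {t z i j : G} (C : Cfg t z i j) : (i * j) ^ 2 = t := by
  rw [C.rij.sq, C.i2, C.j2, ← pow_two, C.t2, mul_one]

lemma Cfg.swap {t z i j : G} (C : Cfg t z i j) : Cfg t z j i :=
  ⟨C.H, C.t1, C.t2, C.z1, C.z2, C.zt, C.om, C.j2, C.i2, C.rij.symm,
    fun h => C.nn fun g => (h g).symm⟩

lemma Cfg.rk {t z i j : G} (C : Cfg t z i j) : R t (i * j) i := by
  have := (R.self i).mul_left C.rij.symm
  simpa using this

/-- existence of the two outer elements, first form -/
lemma exists_hk {t z i j : G} (C : Cfg t z i j) :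
    ∃ h k : G, Tg t h i ∧ ¬ Tg t h j ∧ ¬ Tg t k i ∧ Tg t k j := by
  have a1 : ∃ g, ¬ Tg t g i := by
    by_contra hcon
    push Not at hcon
    exact C.nn fun g => ⟨hcon g, nn_aux C C.t1 C.t2 C.i2 C.j2 C.rij hcon g⟩
  have a2 : ∃ g, ¬ Tg t g j := by
    by_contra hcon
    push Not at hcon
    exact C.nn fun g => ⟨nn_aux C C.t1 C.t2 C.j2 C.i2 C.rij.symm hcon g, hcon g⟩
  have a3 : ∃ g, ¬ Tg t g (i * j) := by
    by_contra hcon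
    push Not at hcon
    have h1 := nn_aux C C.t1 C.t2 C.ij2 C.i2 C.rk hcon
    exact C.nn fun g => ⟨h1 g, nn_aux C C.t1 C.t2 C.i2 C.j2 C.rij h1 g⟩
  obtain ⟨g1, h1⟩ := a1
  obtain ⟨g2, h2⟩ := a2
  obtain ⟨g3, h3⟩ := a3
  by_cases hi : Tg t g3 i
  · have hj : ¬ Tg t g3 j := fun hj => h3 (hi.mul_right hj)
    by_cases h4 : Tg t g1 j
    · exact ⟨g3, g1, hi, hj, h1, h4⟩
    · exact ⟨g3, g1 * g3, hi, hj, Tg.not_mul h1 hi, C.nn_mul C.j4 h4 hj⟩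
  · have hj : Tg t g3 j := by
      by_contra hj
      exact h3 (C.nn_mul_right C.i4 C.j4 hi hj)
    by_cases h4 : Tg t g2 i
    · exact ⟨g2, g3, h4, h2, hi, hj⟩
    · exact ⟨g2 * g3, g3, C.nn_mul C.i4 h4 hi, Tg.not_mul h2 hj, hi, hj⟩

lemma norm_h {t z i j : G} (C : Cfg t z i j) {h : G} (h1 : Tg t h i) (h2 : ¬ Tg t h j) :
    ∃ h', R 1 h' i ∧ R z h' j := by
  obtain ⟨p1, p2, p3, p4, p5, p6, p7⟩ := C.prods
  have key : ∀ h : G, R 1 h i → ¬ Tg t h j → ∃ h', R 1 h' i ∧ R z h' j := by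
    intro h h1 h2
    rcases C.om' C.j4 h2 with h2 | h2
    · exact ⟨h, h1, h2⟩
    · refine ⟨h * i, by simpa using h1.mul_left (R.self i), ?_⟩
      have := h2.mul_left C.rij
      rwa [p7] at this
  rcases h1 with h1 | h1
  · exact key h h1 h2
  · refine key (h * j) ?_ ?_
    · have := h1.mul_left C.rij.symm
      rwa [p5] at this
    · exact Tg.not_mul h2 (Or.inl (R.self j))

lemma nosq {t z i j : G} (C : Cfg t z i j) {f : G} (h1 : f * i = i * f) (h2 : f * j = j * f) :
    f ^ 2 ≠ t := by
  intro h
  have h3 := (R.of_comm h1).sq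
  rw [h, C.i2, one_mul, ← pow_two, C.t2] at h3
  have h4 := (R.of_comm h2).mul_left C.rij
  rw [one_mul] at h4
  exact C.t1 (h4.symm.unique (R.of_comm (C.H.cen _ h3 j)))

lemma factX {t z i j : G} (C : Cfg t z i j) {q q' g u : G} (hq : q ^ 2 = t) (hq' : q' ^ 2 = t)
    (hR : R t q q') (h1 : Tg t g q) (h2 : ¬ Tg t g q') (hg : g ^ 4 = 1) (hu : u = z ∨ u = t * z) :
    ∃ y, y ^ 2 = u ∧ ¬ Tg t y q' := by
  obtain ⟨p1, p2, p3, p4, p5, p6, p7⟩ := C.prods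
  have key : ∀ g : G, R 1 g q → ¬ Tg t g q' → g ^ 4 = 1 → ∃ y, y ^ 2 = u ∧ ¬ Tg t y q' := by
    intro g h1 h2 hg
    have h3 : (g * q) ^ 2 = t * g ^ 2 := by
      rw [h1.sq, hq, one_mul]; exact C.H.cen t C.t2 _
    have h4 : ¬ Tg t (g * q) q' := by
      intro h
      have := h.mul_left (show Tg t q⁻¹ q' from Or.inr hR.inv_left)
      exact h2 (by simpa using this)
    have h5 : ∀ x : G, ¬ Tg t x q' → x ^ 2 ≠ 1 := by
      intro x hx hx2
      exact hx (Or.inl (R.of_comm (C.H.cen x hx2 q').symm))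
    rcases C.om _ (sq_sq hg) with h | h | h | h
    · exact absurd h (h5 g h2)
    · rw [h, p5] at h3
      exact absurd h3 (h5 _ h4)
    · rcases hu with rfl | rfl
      · exact ⟨g, h, h2⟩
      · exact ⟨g * q, by rw [h3, h], h4⟩
    · rcases hu with rfl | rfl
      · exact ⟨g * q, by rw [h3, h, p6], h4⟩
      · exact ⟨g, h, h2⟩
  rcases h1 with h1 | h1
  · exact key g h1 h2 hg
  · have h5 := h1.mul_left hR.symm
    rw [p5] at h5
    refine key (g * q') h5 (Tg.not_mul h2 (Or.inl (R.self q'))) ?_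
    obtain ⟨e, he⟩ := order4 C (pow_four (by rw [hq', C.t2])) (x := q') g
    apply pow_four
    rw [he.sq, hq']
    exact mul_sq_central he.1 (mul_sq_central (sq_sq hg) C.t2 (C.H.cen _ (sq_sq hg))) he.2.1

/-- the set of elements normalising the quaternion subgroup -/
def PP (t i j : G) : Subgroup G where
  carrier := {g | Tg t g i ∧ Tg t g j}
  mul_mem' := fun h h' => ⟨h.1.mul_left h'.1, h.2.mul_left h'.2⟩
  one_mem' := ⟨Or.inl (R.of_comm (by simp)), Or.inl (R.of_comm (by simp))⟩
  inv_mem' := fun h => ⟨h.1.inv_left, h.2.inv_left⟩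

lemma mem_PP {t i j g : G} : g ∈ PP t i j ↔ Tg t g i ∧ Tg t g j := Iff.rfl

lemma factX' {t z i j : G} (C : Cfg t z i j) {g u : G} (hgP : g ∉ PP t i j)
    (hg : g ^ 4 = 1) (hu : u = z ∨ u = t * z) : ∃ y, y ^ 2 = u ∧ y ∉ PP t i j := by
  by_cases hi : Tg t g i
  · have hj : ¬ Tg t g j := fun hj => hgP ⟨hi, hj⟩
    obtain ⟨y, hy, hyy⟩ := factX C C.i2 C.j2 C.rij hi hj hg hu
    exact ⟨y, hy, fun h => hyy h.2⟩
  by_cases hj : Tg t g j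
  · obtain ⟨y, hy, hyy⟩ := factX C C.j2 C.i2 C.rij.symm hj hi hg hu
    exact ⟨y, hy, fun h => hyy h.1⟩
  obtain ⟨y, hy, hyy⟩ := factX C C.ij2 C.i2 C.rk (C.nn_mul_right C.i4 C.j4 hi hj) hi hg hu
  exact ⟨y, hy, fun h => hyy h.1⟩

lemma sq_normal {t z i j : G} (C : Cfg t z i j) {x c : G} (hc : c = x ^ 2) (hc1 : c ^ 2 ≠ 1)
    (hc4 : c ^ 4 = 1) (g : G) : Tg (c ^ 2) g c := by
  obtain ⟨e, he⟩ := order4 C hc4 g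
  obtain ⟨n, f, hf, h⟩ := conj_om C x g
  have h1 : g * c * g⁻¹ = c ^ n := by
    have : Commute (x ^ n) f := C.H.cen f hf _
    rw [hc, ← conj_pow, h, this.mul_pow, hf, mul_one, ← pow_mul, ← pow_mul, mul_comm]
  rw [he.conj, ← eq_mul_inv_iff_mul_eq] at h1
  have h2 : e ∈ zpowers c := by
    rw [h1]; exact mul_mem (pow_mem (mem_zpowers c) n) (inv_mem (mem_zpowers c))
  by_cases h3 : e = 1
  · left; rwa [h3] at he
  · right
    have := unique_invol c e (c ^ 2) h2 (pow_mem (mem_zpowers c) 2) he.1 (sq_sq hc4) h3 hc1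
    rwa [this] at he

lemma lemmaC {t z i j : G} (C : Cfg t z i j) {x c y : G} (hc : c = x ^ 2) (hc1 : c ^ 2 ≠ 1)
    (hc4 : c ^ 4 = 1) (hy : y ^ 2 = c ^ 2) : ∃ w, w ^ 2 = 1 ∧ y = w * c := by
  have hn := sq_normal C hc hc1 hc4
  rcases hn y with h | h
  · refine ⟨y * c⁻¹, ?_, by group⟩
    rw [h.symm.inv_left.symm.sq, hy, one_mul, inv_pow, mul_inv_cancel]
  · exfalso
    have h1 := nn_aux C hc1 (sq_sq hc4) rfl hy h.symm hn x
    have h2 : c * y = y * c := by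
      rw [hc]
      rcases h1 with h1 | h1 <;> exact h1.sq_comm
    exact hc1 (h.unique (R.of_comm h2.symm))

lemma sq_cent {t z i j : G} (C : Cfg t z i j) (g : G) (n : ℕ) :
    (g ^ 2) ^ n * i = i * (g ^ 2) ^ n ∧ (g ^ 2) ^ n * j = j * (g ^ 2) ^ n := by
  obtain ⟨e, he⟩ := order4 C C.i4 g
  obtain ⟨f, hf⟩ := order4 C C.j4 g
  have h1 : Commute (g ^ 2) i := he.sq_comm
  have h2 : Commute (g ^ 2) j := hf.sq_comm
  exact ⟨h1.pow_left n, h2.pow_left n⟩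

lemma dicho {t z i j : G} (C : Cfg t z i j) {g : G} (hg : g ^ 4 ≠ 1) {y : G}
    (hy : y ∉ PP t i j) : y ^ 4 ≠ 1 := by
  intro hy4
  obtain ⟨k, hk1, hk2⟩ := exists_quarter C.H.p (g ^ 2) (by rw [← pow_mul]; exact hg)
  obtain ⟨c1, c2⟩ := sq_cent C g (2 ^ k)
  have hc : (g ^ 2) ^ 2 ^ k = (g ^ 2 ^ k) ^ 2 := by rw [← pow_mul, ← pow_mul, mul_comm]
  generalize (g ^ 2) ^ 2 ^ k = c at *
  have h1 : c ^ 2 = z ∨ c ^ 2 = t * z := by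
    rcases C.om _ (sq_sq hk2) with h | h | h | h
    · exact absurd h hk1
    · exact absurd h (nosq C c1 c2)
    · exact Or.inl h
    · exact Or.inr h
  obtain ⟨y', hy', hyP⟩ := factX' C hy hy4 h1
  obtain ⟨w, hw, rfl⟩ := lemmaC C hc hk1 hk2 hy'
  apply hyP
  have := C.H.cen w hw
  constructor
  · exact Tg.mul_left (Or.inl (R.of_comm (this i).symm)) (Or.inl (R.of_comm c1))
  · exact Tg.mul_left (Or.inl (R.of_comm (this j).symm)) (Or.inl (R.of_comm c2))

end core

section exponent
variable {G : Type*} [Group G] [Finite G]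

lemma prod_pow {t z i j : G} (C : Cfg t z i j) {a k c : G} {q : ℕ} (hc : c = a ^ 2 ^ (q + 1))
    (hc1 : c ^ 2 ≠ 1) (hc4 : c ^ 4 = 1) (hk : Commute k c) (n : ℕ) :
    ∃ (s : ℕ) (e : G), s % 2 = 1 ∧ e ^ 2 = 1 ∧
      (k * a) ^ 2 ^ n = k ^ 2 ^ n * a ^ (2 ^ n * s) * e := by
  induction n with
  | zero => exact ⟨1, 1, rfl, by simp, by simp⟩
  | succ n ih =>
    obtain ⟨s, e, hs, he, h⟩ := ih
    rw [pow_succ 2 n, pow_mul, h, pow_mul k]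
    have hK : Commute (k ^ 2 ^ n) c := hk.pow_left _
    generalize k ^ 2 ^ n = K at h hK ⊢
    obtain ⟨r, f, hf, hr⟩ := conj_om C a K⁻¹
    rw [inv_inv] at hr
    have hfc : Commute (a ^ r) f := C.H.cen f hf _
    have hpow : ∀ N : ℕ, K⁻¹ * a ^ N * K = a ^ (r * N) * f ^ N := by
      intro N
      have := conj_pow (i := N) (a := K⁻¹) (b := a)
      rw [inv_inv, hr, hfc.mul_pow] at this
      rw [← this, pow_mul]
    have hr4 : r % 4 = 1 := by
      apply mod_four hc1 hc4
      have h1 := hpow (2 ^ (q + 1))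
      rw [← hc, mul_comm r, pow_mul, ← hc] at h1
      rw [pow_succ' 2 q, pow_mul f, hf, one_pow, mul_one, mul_assoc, ← hK.eq, inv_mul_cancel_left] at h1
      exact h1.symm
    have hN := hpow (2 ^ n * s)
    set N := 2 ^ n * s with hNdef
    have hfN : (f ^ N) ^ 2 = 1 := by rw [← pow_mul, mul_comm, pow_mul, hf, one_pow]
    refine ⟨s * ((r + 1) / 2), f ^ N, ?_, hfN, ?_⟩
    · rw [Nat.mul_mod, hs]; omega
    have hce : Commute (K * a ^ N) e := C.H.cen e he _
    rw [hce.mul_pow, he, mul_one]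
    have e1 : (K * a ^ N) ^ 2 = K ^ 2 * (K⁻¹ * a ^ N * K) * a ^ N := by
      rw [pow_two, pow_two]; group
    rw [e1, hN]
    have e2 : 2 ^ n * 2 * (s * ((r + 1) / 2)) = r * N + N := by
      obtain ⟨u, hu⟩ : ∃ u, r = 4 * u + 1 := ⟨r / 4, by omega⟩
      have : (r + 1) / 2 = 2 * u + 1 := by omega
      rw [this, hu, hNdef]; ring
    rw [e2, pow_add, ← mul_assoc (K ^ 2), mul_assoc _ (f ^ N), ← C.H.cen _ hfN]
    simp only [mul_assoc]

lemma order_ge {m : ℕ} {x : G} (hp : IsPGroup 2 G) (h : x ^ 2 ^ m ≠ 1) : ∃ d, orderOf x = 2 ^ (m + 1 + d) := by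
  obtain ⟨n, hn⟩ := order_two_pow hp x
  have : m + 1 ≤ n := by
    by_contra hcon
    apply h
    apply orderOf_dvd_iff_pow_eq_one.1
    rw [hn]
    exact pow_dvd_pow 2 (by omega)
  exact ⟨n - (m + 1), by rw [hn]; congr 1; omega⟩

lemma pow_ne {x : G} {m n : ℕ} (hx : orderOf x = 2 ^ m) (h : n < m) : x ^ 2 ^ n ≠ 1 := by
  intro hcon
  have := orderOf_dvd_of_pow_eq_one hcon
  rw [hx] at this
  have := Nat.pow_dvd_pow_iff_le_right (x := 2) (by norm_num) |>.1 this
  omega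

lemma sq_PP {t z i j : G} (C : Cfg t z i j) (g : G) (n : ℕ) : (g ^ 2) ^ n ∈ PP t i j :=
  ⟨Or.inl (R.of_comm (sq_cent C g n).1), Or.inl (R.of_comm (sq_cent C g n).2)⟩

lemma exp4 {t z i j : G} (C : Cfg t z i j) {h0 k0 : G} (hh : h0 ∉ PP t i j) (hk0 : k0 ∉ PP t i j)
    (hhk : h0⁻¹ * k0 ∉ PP t i j) (g : G) : g ^ 4 = 1 := by
  by_contra hg
  have hd : ∀ y, y ∉ PP t i j → y ^ 4 ≠ 1 := fun y hy => dicho C hg hy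
  obtain ⟨k, hkP, hmin⟩ : ∃ k, k ∉ PP t i j ∧ ∀ y, y ∉ PP t i j → orderOf k ≤ orderOf y := by
    have : Nonempty {x : G // x ∉ PP t i j} := ⟨⟨h0, hh⟩⟩
    obtain ⟨k, hk⟩ := Finite.exists_min (fun x : {x : G // x ∉ PP t i j} => orderOf x.1)
    exact ⟨k.1, k.2, fun y hy => hk ⟨y, hy⟩⟩
  obtain ⟨h, hhP, hkh⟩ : ∃ h, h ∉ PP t i j ∧ k * h ∉ PP t i j := by
    by_cases h1 : k * h0 ∈ PP t i j
    · refine ⟨k0, hk0, fun h2 => hhk ?_⟩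
      have := mul_mem (inv_mem h1) h2
      simpa [mul_assoc] using this
    · exact ⟨h0, hh, h1⟩
  obtain ⟨q, hq⟩ := order_ge (m := 2) C.H.p (hd k hkP)
  obtain ⟨d, hdd⟩ : ∃ d, orderOf h = 2 ^ (3 + q + d) := by
    obtain ⟨d', hd'⟩ := order_two_pow C.H.p h
    have := hmin h hhP
    rw [hq, hd'] at this
    have := (Nat.pow_le_pow_iff_right (by norm_num)).1 this
    exact ⟨d' - (3 + q), by rw [hd']; congr 1; omega⟩
  obtain ⟨a, ha⟩ : ∃ a, a = h ^ 2 ^ d := ⟨_, rfl⟩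
  have hapow : ∀ n, a ^ 2 ^ n = h ^ 2 ^ (d + n) := by
    intro n; rw [ha, ← pow_mul, pow_add]
  have hyP : k * a ∉ PP t i j := by
    rw [ha]
    rcases d with _ | d
    · simpa using hkh
    · intro hcon
      apply hkP
      rw [pow_succ' 2, pow_mul] at hcon
      exact (Subgroup.mul_mem_cancel_right _ (sq_PP C h _)).1 hcon
  obtain ⟨c, hc⟩ : ∃ c, c = a ^ 2 ^ (q + 1) := ⟨_, rfl⟩
  obtain ⟨D, hD⟩ : ∃ D, D = k ^ 2 ^ (q + 1) := ⟨_, rfl⟩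
  have hc1 : c ^ 2 ≠ 1 := by
    rw [hc, ← pow_mul, ← pow_succ, hapow]
    exact pow_ne hdd (by omega)
  have hc4 : c ^ 4 = 1 := by
    rw [hc, ← pow_mul, show 2 ^ (q + 1) * 4 = 2 ^ (q + 3) by ring, hapow,
      show d + (q + 3) = 3 + q + d by ring, ← hdd, pow_orderOf_eq_one]
  have hD1 : D ^ 2 ≠ 1 := by
    rw [hD, ← pow_mul, ← pow_succ]
    exact pow_ne hq (by omega)
  have hD4 : D ^ 4 = 1 := by
    rw [hD, ← pow_mul, show 2 ^ (q + 1) * 4 = 2 ^ (q + 3) by ring,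
      show (q + 3) = 2 + 1 + q by ring, ← hq, pow_orderOf_eq_one]
  have hcsq : c = (a ^ 2 ^ q) ^ 2 := by rw [hc, ← pow_mul, pow_succ]
  have hDsq : D = (k ^ 2 ^ q) ^ 2 := by rw [hD, ← pow_mul, pow_succ]
  have hcc : c * i = i * c ∧ c * j = j * c := by
    have := sq_cent C (a ^ 2 ^ q) 1
    rwa [pow_one, ← hcsq] at this
  have hDc : D * i = i * D ∧ D * j = j * D := by
    have := sq_cent C (k ^ 2 ^ q) 1
    rwa [pow_one, ← hDsq] at this
  have hval : ∀ f : G, f ^ 2 ≠ 1 → f ^ 4 = 1 → f * i = i * f ∧ f * j = j * f →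
      f ^ 2 = z ∨ f ^ 2 = t * z := by
    intro f h1 h2 h3
    rcases C.om _ (sq_sq h2) with h | h | h | h
    · exact absurd h h1
    · exact absurd h (nosq C h3.1 h3.2)
    · exact Or.inl h
    · exact Or.inr h
  obtain ⟨p1, p2, p3, p4, p5, p6, p7⟩ := C.prods
  have heq : D ^ 2 = c ^ 2 := by
    by_contra hne
    have n1 := sq_normal C hcsq hc1 hc4 D
    have n2 := (sq_normal C hDsq hD1 hD4 c).symm
    have hR : R 1 D c := by
      rcases n1 with n1 | n1
      · exact n1
      · rcases n2 with n2 | n2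
        · exact n2
        · exact absurd (n2.unique n1) hne
    have hs := hR.sq
    rw [one_mul] at hs
    apply nosq C (f := D * c)
      (show Commute (D * c) i from Commute.mul_left hDc.1 hcc.1)
      (show Commute (D * c) j from Commute.mul_left hDc.2 hcc.2)
    rw [hs]
    rcases hval D hD1 hD4 hDc with h1 | h1 <;> rcases hval c hc1 hc4 hcc with h2 | h2 <;>
      rw [h1, h2] <;> first | exact p2 | exact p3 | exact absurd (h1.trans h2.symm) hne
  obtain ⟨w, hw, hDw⟩ := lemmaC C hcsq hc1 hc4 heq
  have hkc : Commute k c := by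
    have e1 : c = w⁻¹ * D := by rw [hDw]; group
    rw [e1]
    have e2 : Commute k w := C.H.cen w hw k
    have e3 : Commute k D := by rw [hD]; exact (Commute.refl k).pow_right _
    exact e2.inv_right.mul_right e3
  obtain ⟨s, e, hs, he, hy⟩ := prod_pow C hc hc1 hc4 hkc (q + 1)
  rw [← hD, pow_mul, ← hc] at hy
  have hy2 : ((k * a) ^ 2 ^ (q + 1)) ^ 2 = 1 := by
    have h1 : Commute (D * c ^ s) e := C.H.cen e he _
    have h2 : Commute D (c ^ s) := by
      rw [hD]; exact (hkc.pow_left _).pow_right _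
    rw [hy, h1.mul_pow, he, mul_one, h2.mul_pow, heq]
    obtain ⟨u, hu⟩ : ∃ u, s = 2 * u + 1 := ⟨s / 2, by omega⟩
    rw [hu, ← pow_mul, ← pow_add, show 2 + (2 * u + 1) * 2 = 4 * (u + 1) by ring, pow_mul, hc4, one_pow]
  have h1 := hmin _ hyP
  rw [← pow_mul, ← pow_succ] at hy2
  have h2 := orderOf_le_of_pow_eq_one (by positivity) hy2
  rw [hq] at h1
  have h3 := (Nat.pow_le_pow_iff_right (by norm_num)).1 (h1.trans h2)
  omega

end exponent

section final
variable {G : Type*} [Group G] [Finite G]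

lemma Cfg.tz1 {t z i j : G} (C : Cfg t z i j) : t * z ≠ 1 := by
  intro h
  obtain ⟨p1, p2, p3, p4, p5, p6, p7⟩ := C.prods
  exact C.zt (mul_left_cancel (h.trans p5.symm))

lemma Cfg.sqne {t z i j : G} (C : Cfg t z i j) {e g x : G} (hR : R e g x) (he : e ≠ 1) : g ^ 2 ≠ 1 := by
  intro h
  exact he (hR.unique (R.of_comm (C.H.cen g h x).symm))

lemma h_sq {t z i j : G} (C : Cfg t z i j) (ex : ∀ g : G, g ^ 4 = 1) {h : G} (h1 : R 1 h i)
    (h2 : R z h j) : h ^ 2 = z := by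
  obtain ⟨p1, p2, p3, p4, p5, p6, p7⟩ := C.prods
  rcases C.om _ (sq_sq (ex h)) with hh | hh | hh | hh
  · exact absurd hh (C.sqne h2 C.z1)
  · exfalso
    have h3 := h2.mul_left C.rij
    rw [C.tz] at h3
    apply C.sqne h3 C.tz1
    rw [h1.sq, hh, C.i2, one_mul, p5]
  · exact hh
  · exfalso
    have h3 := h1.mul_left C.rij.symm
    rw [one_mul] at h3
    apply C.sqne h3 C.t1
    rw [h2.sq, hh, C.j2, p7, p1]

lemma hk_R {t z i j : G} (C : Cfg t z i j) (ex : ∀ g : G, g ^ 4 = 1) {h k : G} (h1 : R 1 h i)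
    (h2 : R z h j) (k1 : R z k i) (k2 : R 1 k j) : R z h k := by
  obtain ⟨p1, p2, p3, p4, p5, p6, p7⟩ := C.prods
  have hs := h_sq C ex h1 h2
  have ks := h_sq C.swap ex k2 k1
  obtain ⟨e, he⟩ := order4 C (ex k) h
  have hks := he.sq
  rw [hs, ks, p1, mul_one] at hks
  have hi : R z (h * k) i := by simpa using h1.mul_left k1
  have hj : R z (h * k) j := by simpa using h2.mul_left k2
  rcases C.om _ he.1 with rfl | rfl | rfl | rfl
  · exact absurd hks (C.sqne hi C.z1)
  · exfalso
    have h3 : R 1 (h * k) (i * j) := by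
      have := hi.mul_right hj
      rwa [p1] at this
    have h4 := hi.mul_left C.rk
    rw [C.tz] at h4
    apply C.sqne h4 C.tz1
    rw [h3.sq, hks, C.ij2, one_mul, p5]
  · exact he
  · exfalso
    have h3 := hj.mul_left C.rij
    rw [C.tz] at h3
    apply C.sqne h3 C.tz1
    rw [hi.sq, hks, C.i2, p7, p1]

lemma cent_om {t z i j : G} (C : Cfg t z i j) (ex : ∀ g : G, g ^ 4 = 1) {h k : G} (h1 : R 1 h i)
    (h2 : R z h j) (k1 : R z k i) (k2 : R 1 k j) {c : G} (ci : R 1 c i) (cj : R 1 c j) :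
    c ^ 2 = 1 := by
  obtain ⟨p1, p2, p3, p4, p5, p6, p7⟩ := C.prods
  have hi : R z (h * k) i := by simpa using h1.mul_left k1
  have hj : R z (h * k) j := by simpa using h2.mul_left k2
  have hs := h_sq C ex h1 h2
  have ks := h_sq C.swap ex k2 k1
  have hks : (h * k) ^ 2 = z := by
    rw [(hk_R C ex h1 h2 k1 k2).sq, hs, ks, p1, mul_one]
  have hij : R 1 (h * k) (i * j) := by
    have := hi.mul_right hj
    rwa [p1] at this
  have key : ∀ (u q x y : G), u ^ 2 = z → q ^ 2 = t → R 1 u q → R 1 c q → R 1 c x → R z u x →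
      R (t * z) (u * q) x → ∀ e, R e u c → e * c ^ 2 = 1 ∨ e * c ^ 2 = t := by
    intro u q x y hu hq huq hcq hcx hux huqx e he
    have hv := sq_sq (ex c)
    rcases C.om _ (mul_sq_central he.1 hv he.2.1) with h | h | h | h
    · exact Or.inl h
    · exact Or.inr h
    · exfalso
      have a1 : R z (u * c) x := by simpa using hux.mul_left hcx
      apply C.sqne a1 C.z1
      rw [he.sq, hu, ← mul_assoc, he.2.1 z |>.symm, mul_assoc, h, p1]
    · exfalso
      have a1 : R (t * z) (u * q * c) x := by simpa using huqx.mul_left hcx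
      apply C.sqne a1 C.tz1
      have a2 : R e (u * q) c := by simpa using he.mul_left hcq.symm
      rw [a2.sq, huq.sq, hu, hq, one_mul, ← mul_assoc, he.2.1 _ |>.symm, mul_assoc, h, C.tz, p4]
  obtain ⟨e, he⟩ := order4 C (ex c) h
  obtain ⟨f, hf⟩ := order4 C (ex c) k
  have r1 := key h i j 1 hs C.i2 h1 ci cj h2 (by rw [← C.tz]; exact h2.mul_left C.rij) e he
  have r2 := key k j i 1 ks C.j2 k2 cj ci k1 (by rw [← C.tz]; exact k1.mul_left C.rij.symm) f hf
  have r3 := key (h * k) (i * j) i 1 hks C.ij2 hij (by simpa using ci.mul_right cj) ci hi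
    (by rw [← C.tz]; exact hi.mul_left C.rk) _ (he.mul_left hf)
  have hv := sq_sq (ex c)
  have hvv : c ^ 2 * c ^ 2 = 1 := by rw [← pow_two, hv]
  have prod : (e * c ^ 2) * (f * c ^ 2) * (e * f * c ^ 2) = c ^ 2 := by
    have e1 := he.2.1
    have f1 := hf.2.1
    have v1 := C.H.cen _ hv
    have ee : e * e = 1 := by rw [← pow_two, he.1]
    have ff : f * f = 1 := by rw [← pow_two, hf.1]
    generalize c ^ 2 = v at *
    calc (e * v) * (f * v) * (e * f * v) = e * (v * f) * v * e * f * v := by group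
      _ = e * f * (v * v) * e * f * v := by rw [f1 v]; group
      _ = e * (f * e) * f * v := by rw [hvv]; group
      _ = (e * e) * (f * f) * v := by rw [e1 f]; group
      _ = v := by rw [ee, ff]; group
  have hne := nosq C ci.comm cj.comm
  rcases r1 with r1 | r1 <;> rcases r2 with r2 | r2 <;> rcases r3 with r3 | r3 <;>
    rw [r1, r2, r3] at prod <;> simp only [one_mul, mul_one, p5] at prod <;>
    first | exact prod.symm | exact absurd prod.symm hne

/-- the homomorphism from the quaternion group determined by a quaternion pair -/
noncomputable def quatHom (A B u : G) (hu : u ^ 2 = 1) (hA : A ^ 2 = u) (hB : B ^ 2 = u) (hR : R u A B) :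
    QuaternionGroup 2 →* G := by
  have hA4 : A ^ 4 = 1 := pow_four (by rw [hA, hu])
  have hmod : ∀ m n : ℕ, m % 4 = n % 4 → A ^ m = A ^ n := by
    intro m n h
    rw [← Nat.div_add_mod m 4, ← Nat.div_add_mod n 4, h, pow_add, pow_add, pow_mul, pow_mul, hA4,
      one_pow, one_pow]
  have hsw : ∀ m : ℕ, A ^ m * B = B * A ^ (3 * m) := by
    intro m
    have h1 : A * B = B * A ^ 3 := by
      rw [hR.2.2, pow_succ, hA, ← mul_assoc, ← mul_assoc, ← hR.2.1 B]
    have h2 : SemiconjBy B (A ^ 3) A := h1.symm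
    have h3 := h2.pow_right m
    rw [pow_mul]
    exact h3.eq.symm
  refine MonoidHom.mk' (fun q => match q with
    | QuaternionGroup.a n => A ^ n.val
    | QuaternionGroup.xa n => B * A ^ n.val) ?_
  rintro (m | m) (n | n)
  · rw [QuaternionGroup.a_mul_a]
    show A ^ _ = A ^ _ * A ^ _
    rw [← pow_add]
    apply hmod
    revert m n; decide
  · rw [QuaternionGroup.a_mul_xa]
    show B * A ^ _ = A ^ _ * (B * A ^ _)
    rw [← mul_assoc, hsw, mul_assoc, ← pow_add]
    congr 1
    apply hmod
    revert m n; decide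
  · rw [QuaternionGroup.xa_mul_a]
    show B * A ^ _ = B * A ^ _ * A ^ _
    rw [mul_assoc, ← pow_add]
    congr 1
    apply hmod
    revert m n; decide
  · rw [QuaternionGroup.xa_mul_xa]
    show A ^ _ = B * A ^ _ * (B * A ^ _)
    rw [mul_assoc, ← mul_assoc (A ^ _), hsw, mul_assoc, ← pow_add, ← mul_assoc, ← pow_two B, hB, ← hA,
      ← pow_add]
    apply hmod
    revert m n; decide

lemma quatHom_a (A B u : G) (hu : u ^ 2 = 1) (hA : A ^ 2 = u) (hB : B ^ 2 = u) (hR : R u A B)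
    (n : ZMod 4) : quatHom A B u hu hA hB hR (QuaternionGroup.a n) = A ^ n.val := rfl

lemma quatHom_xa (A B u : G) (hu : u ^ 2 = 1) (hA : A ^ 2 = u) (hB : B ^ 2 = u) (hR : R u A B)
    (n : ZMod 4) : quatHom A B u hu hA hB hR (QuaternionGroup.xa n) = B * A ^ n.val := rfl

lemma q8_inv : ∀ p : QuaternionGroup 2 × QuaternionGroup 2, p ≠ 1 →
    (p = (QuaternionGroup.a 2, 1) ∨ p = (1, QuaternionGroup.a 2) ∨
      p = (QuaternionGroup.a 2, QuaternionGroup.a 2)) ∨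
    (p * p = (QuaternionGroup.a 2, 1) ∨ p * p = (1, QuaternionGroup.a 2) ∨
      p * p = (QuaternionGroup.a 2, QuaternionGroup.a 2)) := by
  decide

lemma q8_cent : ∀ p : QuaternionGroup 2, p * p = 1 → ∀ q, p * q = q * p := by
  decide

end final

section iso
variable {G : Type*} [Group G] [Finite G]

theorem main_iso {t z i j : G} (C : Cfg t z i j) :
    Nonempty (G ≃* (QuaternionGroup 2 × QuaternionGroup 2)) := by
  obtain ⟨p1, p2, p3, p4, p5, p6, p7⟩ := C.prods
  obtain ⟨h0, k0, a1, a2, a3, a4⟩ := exists_hk C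
  obtain ⟨h, h1, h2⟩ := norm_h C a1 a2
  obtain ⟨k, k2, k1⟩ := norm_h C.swap a4 a3
  have hz : ∀ g x, R z g x → ¬ Tg t g x := by
    rintro g x hg (h | h)
    · exact C.z1 (hg.unique h)
    · exact C.zt (hg.unique h)
  have ex : ∀ g : G, g ^ 4 = 1 := by
    apply exp4 C (h0 := h) (k0 := k)
    · exact fun hh => hz _ _ h2 hh.2
    · exact fun hh => hz _ _ k1 hh.1
    · intro hh
      exact hz _ _ (by simpa using h2.inv_left.mul_left k2) hh.2
  have hs := h_sq C ex h1 h2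
  have ks := h_sq C.swap ex k2 k1
  have hk := hk_R C ex h1 h2 k1 k2
  have hzi : z⁻¹ = z := by rw [inv_eq_iff_mul_eq_one, p1]
  have hinv : ∀ {e a b : G}, R e a b → R e a b⁻¹ := fun h => h.symm.inv_left.symm
  have hA2 : (i * h⁻¹) ^ 2 = t * z := by
    rw [(hinv h1.symm).sq, C.i2, inv_pow, hs, hzi, one_mul]
  have hB2 : (j * k⁻¹) ^ 2 = t * z := by
    rw [(hinv k2.symm).sq, C.j2, inv_pow, ks, hzi, one_mul]
  have hAB : R (t * z) (i * h⁻¹) (j * k⁻¹) := by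
    have := (C.rij.mul_right (hinv k1.symm)).mul_left (h2.inv_left.mul_right (hinv hk.inv_left))
    rwa [p1, mul_one] at this
  have tz2 : (t * z) ^ 2 = 1 := by rw [pow_two, p4]
  have c1 : Commute h (i * h⁻¹) := by
    have := h1.mul_right (hinv (R.self h)); rw [one_mul] at this; exact this.comm
  have c2 : Commute h (j * k⁻¹) := by
    have := h2.mul_right (hinv hk); rw [p1] at this; exact this.comm
  have c3 : Commute k (i * h⁻¹) := by
    have := k1.mul_right (hinv hk.symm); rw [p1] at this; exact this.comm
  have c4 : Commute k (j * k⁻¹) := by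
    have := k2.mul_right (hinv (R.self k)); rw [one_mul] at this; exact this.comm
  let F1 := quatHom h k z C.z2 hs ks hk
  let F2 := quatHom (i * h⁻¹) (j * k⁻¹) (t * z) tz2 hA2 hB2 hAB
  have comm : ∀ m n, Commute (F1 m) (F2 n) := by
    rintro (m | m) (n | n)
    · exact c1.pow_pow _ _
    · exact (c2.pow_left _).mul_right (c1.pow_pow _ _)
    · exact (c3.pow_right _).mul_left (c1.pow_pow _ _)
    · exact (c4.mul_right (c3.pow_right _)).mul_left ((c2.pow_left _).mul_right (c1.pow_pow _ _))
  let F := MonoidHom.noncommCoprod F1 F2 comm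
  have v1 : F1 (QuaternionGroup.a 2) = z := hs
  have v2 : F2 (QuaternionGroup.a 2) = t * z := hA2
  have w1 : F (QuaternionGroup.a 2, 1) = z := by
    simp only [F, MonoidHom.noncommCoprod_apply, map_one, v1, mul_one]
  have w2 : F (1, QuaternionGroup.a 2) = t * z := by
    simp only [F, MonoidHom.noncommCoprod_apply, map_one, v2, one_mul]
  have w3 : F (QuaternionGroup.a 2, QuaternionGroup.a 2) = t := by
    simp only [F, MonoidHom.noncommCoprod_apply, v1, v2, p2]
  have inj : Function.Injective F := by
    rw [injective_iff_map_eq_one]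
    intro p hp
    by_contra hne
    have hpp : F (p * p) = 1 := by rw [map_mul, hp, one_mul]
    have b1 : ∀ q, F q = 1 → ¬ (q = (QuaternionGroup.a 2, 1) ∨ q = (1, QuaternionGroup.a 2) ∨
      q = (QuaternionGroup.a 2, QuaternionGroup.a 2)) := by
      rintro q hq (rfl | rfl | rfl)
      · exact C.z1 (w1.symm.trans hq)
      · exact C.tz1 (w2.symm.trans hq)
      · exact C.t1 (w3.symm.trans hq)
    rcases q8_inv p hne with h | h
    · exact b1 _ hp h
    · exact b1 _ hpp h
  have rt : t ∈ F.range := ⟨_, w3⟩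
  have rz : z ∈ F.range := ⟨_, w1⟩
  have rh : h ∈ F.range := ⟨(QuaternionGroup.a 1, 1), by
    simp only [F, MonoidHom.noncommCoprod_apply, map_one, mul_one]
    exact pow_one h⟩
  have rk : k ∈ F.range := ⟨(QuaternionGroup.xa 0, 1), by
    simp only [F, MonoidHom.noncommCoprod_apply, map_one, mul_one]
    show k * h ^ 0 = k
    simp⟩
  have ri' : i * h⁻¹ ∈ F.range := ⟨(1, QuaternionGroup.a 1), by
    simp only [F, MonoidHom.noncommCoprod_apply, map_one, one_mul]
    exact pow_one _⟩
  have rj' : j * k⁻¹ ∈ F.range := ⟨(1, QuaternionGroup.xa 0), by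
    simp only [F, MonoidHom.noncommCoprod_apply, map_one, one_mul]
    show j * k⁻¹ * (i * h⁻¹) ^ 0 = j * k⁻¹
    simp⟩
  have ri : i ∈ F.range := (Subgroup.mul_mem_cancel_right _ (inv_mem rh)).1 ri'
  have rj : j ∈ F.range := (Subgroup.mul_mem_cancel_right _ (inv_mem rk)).1 rj'
  have surj : Function.Surjective F := by
    rw [← MonoidHom.range_eq_top, eq_top_iff]
    intro g _
    obtain ⟨e, he⟩ := order4 C C.i4 g
    obtain ⟨f, hf⟩ := order4 C C.j4 g
    have s1 : ∀ f, f ^ 2 = 1 → ∃ r ∈ F.range, R 1 r i ∧ R f r j := by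
      intro f hf
      rcases C.om f hf with rfl | rfl | rfl | rfl
      · exact ⟨1, one_mem _, R.of_comm (by simp), R.of_comm (by simp)⟩
      · exact ⟨i, ri, R.self i, C.rij⟩
      · exact ⟨h, rh, h1, h2⟩
      · exact ⟨i * h, mul_mem ri rh, by simpa using (R.self i).mul_left h1, C.rij.mul_left h2⟩
    have s2 : ∀ f, f ^ 2 = 1 → ∃ r ∈ F.range, R f r i ∧ R 1 r j := by
      intro f hf
      rcases C.om f hf with rfl | rfl | rfl | rfl
      · exact ⟨1, one_mem _, R.of_comm (by simp), R.of_comm (by simp)⟩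
      · exact ⟨j, rj, C.rij.symm, R.self j⟩
      · exact ⟨k, rk, k1, k2⟩
      · exact ⟨j * k, mul_mem rj rk, C.rij.symm.mul_left k1, by simpa using (R.self j).mul_left k2⟩
    obtain ⟨r1, m1, x1, y1⟩ := s1 f hf.1
    obtain ⟨r2, m2, x2, y2⟩ := s2 e he.1
    have gi : R 1 (r1 * r2 * g) i := by
      have := (x1.mul_left x2).mul_left he
      rwa [one_mul, ← pow_two, he.1] at this
    have gj : R 1 (r1 * r2 * g) j := by
      have := (y1.mul_left y2).mul_left hf
      rwa [mul_one, ← pow_two, hf.1] at this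
    have hm : r1 * r2 * g ∈ F.range := by
      rcases C.om _ (cent_om C ex h1 h2 k1 k2 gi gj) with h | h | h | h <;> rw [h]
      · exact one_mem _
      · exact rt
      · exact rz
      · exact mul_mem rt rz
    exact (Subgroup.mul_mem_cancel_left _ (mul_mem m1 m2)).1 hm
  exact ⟨(MulEquiv.ofBijective F ⟨inj, surj⟩).symm⟩

end iso

end S7

/-- Let `G` be a finite `2`-group with SN but not SSN.  Then every element of order `2` in
`G` is central if and only if `G ≅ Q₈ × Q₈`. -/
theorem stmt_7 (G : Type) [Group G] [Finite G] (h2 : IsPGroup 2 G)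
    (hSN : HasSN G) (hnSSN : ¬ HasSSN G) :
    (∀ g : G, orderOf g = 2 → g ∈ Subgroup.center G) ↔
      Nonempty (G ≃* (QuaternionGroup 2 × QuaternionGroup 2)) := by
  constructor
  · intro hc
    have H : S7.Hyp G := by
      refine ⟨h2, ?_, hSN⟩
      intro w hw x
      by_cases h1 : w = 1
      · simp [h1]
      · exact Subgroup.mem_center_iff.1 (hc w (orderOf_eq_prime hw h1)) x
    unfold HasSSN HasSN at hnSSN
    push Not at hnSSN
    obtain ⟨L, N, hN, Y, hNY, hW⟩ := hnSSN
    have hinj : Function.Injective L.subtype := L.subtype_injective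
    obtain ⟨t, z, i, j, t1, t2, z1, z2, zt, om, i2, j2, rij, nn⟩ :=
      S7.reduce H L (N.map L.subtype) (Y.map L.subtype)
        (Subgroup.map_subtype_le N) (Subgroup.map_subtype_le Y) (by
          rintro l hl _ ⟨n, hn, rfl⟩
          exact ⟨⟨l, hl⟩ * n * ⟨l, hl⟩⁻¹, hN.conj_mem n hn ⟨l, hl⟩, rfl⟩)
        (by rwa [Subgroup.map_le_map_iff_of_injective hinj])
        (by
          intro hcon
          apply hW
          refine ⟨fun n hn g => ?_⟩
          rw [← Subgroup.map_sup] at hcon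
          have := hcon g g.2 n ⟨n, hn, rfl⟩
          obtain ⟨m, hm, hmm⟩ := this
          have : m = g * n * g⁻¹ := Subtype.ext hmm
          rwa [← this])
    refine S7.main_iso (t := t) (z := z) (i := i) (j := j)
      ⟨H, t1, t2, z1, z2, zt, om, i2, j2, rij, fun hall => nn fun g => ⟨?_, ?_⟩⟩
    · exact (hall g).1.imp (fun h => by simpa using h.conj) (fun h => h.conj)
    · exact (hall g).2.imp (fun h => by simpa using h.conj) (fun h => h.conj)
  · rintro ⟨φ⟩ g hg
    rw [Subgroup.mem_center_iff]
    intro x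
    apply φ.injective
    have h1 : φ g * φ g = 1 := by
      have h0 : g ^ 2 = 1 := by rw [← hg, pow_orderOf_eq_one]
      rw [← map_mul, ← pow_two, h0, map_one]
    rw [map_mul, map_mul]
    have h3 := congrArg Prod.fst h1
    have h4 := congrArg Prod.snd h1
    exact Prod.ext (S7.q8_cent _ h3 _).symm (S7.q8_cent _ h4 _).symm
end
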